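/- arXiv:2407.13762 — 4 statements merged into one kernel-verified Lean document; each statement's English description precedes it below -/
import Mathlib

section
/- Let n ≥ 2 and let θ : [0,∞) → 𝒳ₙ be continuous with multiradial Dirichlet energy J(θ) = 0. Then there exist ζ ∈ ℝ and a constant C ≥ 0 such that |θ^j_t − (ζ + (j−1)·2π/n)| ≤ C·e^{−nt} for all t ≥ 0 and all j ∈ {1,…,n}; in particular θ_t converges as t → ∞ to the static equally spaced configuration (ζ, ζ + 2π/n, …, ζ + (n−1)·2π/n), exponentially fast with exponential rate n. -/
open MeasureTheory Filter Set
open scoped Real Topology ENNReal Classical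

noncomputable section

/-- The configuration space `𝒳ₙ` of `n` ordered points on (a lift of) the circle:
`θ¹ < θ² < ⋯ < θⁿ < θ¹ + 2π`. -/
def Xspace (n : ℕ) : Set (Fin n → ℝ) :=
  {x | StrictMono x ∧ ∀ i j : Fin n, x i < x j + 2 * π}

/-- The value `θ^{j+1}`, with the convention `θ^{n+1} = θ¹ + 2π`. -/
def nextVal {n : ℕ} (x : Fin n → ℝ) (j : Fin n) : ℝ :=
  if h : (j : ℕ) + 1 < n then x ⟨(j : ℕ) + 1, h⟩ else x ⟨0, j.pos⟩ + 2 * π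

/-- The gap `θ^{j+1} - θ^j` (with wrap-around convention). -/
def gap {n : ℕ} (x : Fin n → ℝ) (j : Fin n) : ℝ := nextVal x j - x j

/-- The minimal gap `Δ(θ) = min_j (θ^{j+1} - θ^j)`. -/
def minGap {n : ℕ} (x : Fin n → ℝ) : ℝ := ⨅ j : Fin n, gap x j

/-- `d(θ) := max_j |2π/n - (θ^{j+1} - θ^j)|`. -/
def dGap {n : ℕ} (x : Fin n → ℝ) : ℝ := ⨆ j : Fin n, |2 * π / n - gap x j|

/-- `φ^j(θ) = ∑_{k ≠ j} cot((θ^j - θ^k)/2)`. -/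
def phi {n : ℕ} (x : Fin n → ℝ) (j : Fin n) : ℝ :=
  ∑ k ∈ Finset.univ.erase j, Real.cot ((x j - x k) / 2)

/-- `φ_a^j := (a/4) φ^j`. -/
def phiA {n : ℕ} (a : ℝ) (x : Fin n → ℝ) (j : Fin n) : ℝ := a / 4 * phi x j

/-- Absolute continuity of every coordinate of `θ` on `[0, T]`: each component is the
integral of a (locally) integrable function. -/
def AbsCont {n : ℕ} (T : ℝ) (θ : ℝ → Fin n → ℝ) : Prop :=
  ∃ v : ℝ → Fin n → ℝ, (∀ j, IntegrableOn (fun s => v s j) (Icc 0 T)) ∧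
    ∀ t ∈ Icc (0 : ℝ) T, ∀ j, θ t j = θ 0 j + ∫ s in (0 : ℝ)..t, v s j

/-- Truncated multiradial Dirichlet energy `J_T(θ)`. -/
def mEnergy (n : ℕ) (T : ℝ) (θ : ℝ → Fin n → ℝ) : ℝ≥0∞ :=
  if AbsCont T θ then
    ENNReal.ofReal (1 / 2) *
      ∫⁻ s in Ioc (0 : ℝ) T,
        ENNReal.ofReal (∑ j, (deriv (fun t => θ t j) s - 2 * phi (θ s) j) ^ 2)
  else ⊤

/-- Multiradial Dirichlet energy `J(θ) = lim_{T→∞} J_T(θ)`, the supremum of the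
nondecreasing family `J_T(θ)`. -/
def mEnergyInf (n : ℕ) (θ : ℝ → Fin n → ℝ) : ℝ≥0∞ := ⨆ T : ℝ, mEnergy n T θ

lemma cot_neg_real (x : ℝ) : Real.cot (-x) = -Real.cot x := by
  simp [Real.cot_eq_cos_div_sin, div_neg]

lemma cot_add_int_mul_pi (x : ℝ) (m : ℤ) : Real.cot (x + m * π) = Real.cot x := by
  rw [Real.cot_eq_cos_div_sin, Real.cot_eq_cos_div_sin, Real.sin_add_int_mul_pi,
    Real.cos_add_int_mul_pi, mul_div_mul_left]
  exact zpow_ne_zero _ (by norm_num)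

lemma cot_sub_ge {x y : ℝ} (hx : 0 < x) (hxy : x ≤ y) (hy : y < π) :
    y - x ≤ Real.cot x - Real.cot y := by
  have sx : 0 < Real.sin x := Real.sin_pos_of_pos_of_lt_pi hx (by linarith)
  have sy : 0 < Real.sin y := Real.sin_pos_of_pos_of_lt_pi (by linarith) hy
  have hc : 0 < Real.cos ((y - x) / 2) :=
    Real.cos_pos_of_mem_Ioo ⟨by linarith [Real.pi_pos], by linarith⟩
  have ht := Real.le_tan (x := (y - x) / 2) (by linarith) (by linarith)
  rw [Real.tan_eq_sin_div_cos, le_div_iff₀ hc] at ht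
  have e : Real.cot x - Real.cot y = Real.sin (y - x) / (Real.sin x * Real.sin y) := by
    rw [Real.cot_eq_cos_div_sin, Real.cot_eq_cos_div_sin, Real.sin_sub]
    field_simp
  have h1 : Real.sin (y - x) = 2 * Real.sin ((y - x) / 2) * Real.cos ((y - x) / 2) := by
    rw [← Real.sin_two_mul]; ring_nf
  have h2 : Real.sin x * Real.sin y ≤ Real.cos ((y - x) / 2) ^ 2 := by
    rw [Real.cos_sq, show 2 * ((y - x) / 2) = y - x by ring, Real.cos_sub]
    have := Real.neg_one_le_cos (y + x)
    rw [Real.cos_add] at this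
    nlinarith
  rw [e, le_div_iff₀ (mul_pos sx sy), h1]
  calc (y - x) * (Real.sin x * Real.sin y)
      ≤ (y - x) * Real.cos ((y - x) / 2) ^ 2 := by gcongr
    _ ≤ _ := by nlinarith

lemma sub_mul_cot_sub_le {x y : ℝ} (hx : x ∈ Ioo 0 π) (hy : y ∈ Ioo 0 π) :
    (x - y) * (Real.cot x - Real.cot y) ≤ -(x - y) ^ 2 := by
  rcases le_total x y with h | h
  · nlinarith [cot_sub_ge hx.1 h hy.2]
  · nlinarith [cot_sub_ge hy.1 h hx.2]

lemma half_sub_mem_Ioo {n : ℕ} {x : Fin n → ℝ} (hx : x ∈ Xspace n) {j k : Fin n} (h : k < j) :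
    (x j - x k) / 2 ∈ Ioo 0 π :=
  ⟨by linarith [hx.1 h], by linarith [hx.2 j k]⟩

lemma phi_eq_sum {n : ℕ} (x : Fin n → ℝ) (j : Fin n) :
    phi x j = ∑ k, Real.cot ((x j - x k) / 2) := by
  rw [phi, ← Finset.add_sum_erase _ _ (Finset.mem_univ j)]
  simp [Real.cot_eq_cos_div_sin]

lemma cot_half_sub_swap (a b : ℝ) : Real.cot ((b - a) / 2) = -Real.cot ((a - b) / 2) := by
  rw [← cot_neg_real]; ring_nf

lemma sum_phi_eq_zero {n : ℕ} (x : Fin n → ℝ) : ∑ j, phi x j = 0 := by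
  have h : ∑ j, phi x j = -∑ j, phi x j := by
    simp only [phi_eq_sum]
    conv_lhs => rw [Finset.sum_comm]
    simp only [← Finset.sum_neg_distrib, ← cot_half_sub_swap]
  linarith

/-- The drift `2φ` is strongly monotone, with constant `n`, along differences of mean zero. -/
lemma sum_sub_mul_phi_sub_le {n : ℕ} {x y : Fin n → ℝ} (hx : x ∈ Xspace n) (hy : y ∈ Xspace n)
    (hsum : ∑ j, (x j - y j) = 0) :
    ∑ j, (x j - y j) * (2 * (phi x j - phi y j)) ≤ -n * ∑ j, (x j - y j) ^ 2 := by
  set d : Fin n → ℝ := fun j => x j - y j with hd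
  set c : Fin n → Fin n → ℝ := fun j k =>
    Real.cot ((x j - x k) / 2) - Real.cot ((y j - y k) / 2) with hc
  have hanti (j k) : c k j = -c j k := by
    simp only [hc, cot_half_sub_swap (x j) (x k), cot_half_sub_swap (y j) (y k)]; ring
  have hlt {j k : Fin n} (h : k < j) : (d j - d k) * c j k ≤ -(1 / 2) * (d j - d k) ^ 2 := by
    have := sub_mul_cot_sub_le (half_sub_mem_Ioo hx h) (half_sub_mem_Ioo hy h)
    simp only [hd, hc]; linarith
  have hpair (j k) : (d j - d k) * c j k ≤ -(1 / 2) * (d j - d k) ^ 2 := by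
    rcases lt_trichotomy k j with h | rfl | h
    · exact hlt h
    · simp
    · have := hlt h; rw [hanti] at this; linarith
  have hphi (j) : 2 * (phi x j - phi y j) = 2 * ∑ k, c j k := by
    rw [phi_eq_sum, phi_eq_sum, ← Finset.sum_sub_distrib]
  have h1 : ∑ j, d j * (2 * ∑ k, c j k) = ∑ j, ∑ k, (d j - d k) * c j k := by
    have hsw : ∑ j, ∑ k, d k * c j k = -∑ j, ∑ k, d j * c j k := by
      rw [Finset.sum_comm]
      simp only [← Finset.sum_neg_distrib]
      refine Finset.sum_congr rfl fun j _ => Finset.sum_congr rfl fun k _ => ?_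
      rw [hanti]; ring
    simp only [sub_mul, Finset.sum_sub_distrib, hsw, mul_left_comm _ (2 : ℝ), ← Finset.mul_sum]
    ring
  have h2 : ∑ j, ∑ k, (d j - d k) ^ 2 = 2 * n * ∑ j, d j ^ 2 := by
    have e (j k) : (d j - d k) ^ 2 = d j ^ 2 - 2 * d j * d k + d k ^ 2 := by ring
    simp only [e, Finset.sum_add_distrib, Finset.sum_sub_distrib, ← Finset.mul_sum, hsum,
      Finset.sum_const, Finset.card_univ, Fintype.card_fin, nsmul_eq_mul, mul_zero, sub_zero]
    ring
  calc ∑ j, d j * (2 * (phi x j - phi y j)) = ∑ j, ∑ k, (d j - d k) * c j k := by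
        rw [← h1]; exact Finset.sum_congr rfl fun j _ => by rw [hphi]
    _ ≤ ∑ j, ∑ k, -(1 / 2) * (d j - d k) ^ 2 :=
        Finset.sum_le_sum fun j _ => Finset.sum_le_sum fun k _ => hpair j k
    _ = -n * ∑ j, d j ^ 2 := by
        simp only [← Finset.mul_sum, h2]; ring

/-- The equally spaced configuration starting at `ζ`. -/
def equallySpaced (n : ℕ) (ζ : ℝ) (j : Fin n) : ℝ := ζ + (j : ℕ) * (2 * π / n)

lemma equallySpaced_mem {n : ℕ} (hn : 0 < n) (ζ : ℝ) : equallySpaced n ζ ∈ Xspace n := by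
  have hn' : (0 : ℝ) < n := by exact_mod_cast hn
  have hstep : 0 < 2 * π / n := by positivity
  refine ⟨fun i j hij => ?_, fun i j => ?_⟩
  · have : ((i : ℕ) : ℝ) < (j : ℕ) := by exact_mod_cast hij
    simp only [equallySpaced]
    nlinarith
  · have hi : ((i : ℕ) : ℝ) < n := by exact_mod_cast i.2
    have hj : (0 : ℝ) ≤ (j : ℕ) * (2 * π / n) := by positivity
    have : (n : ℝ) * (2 * π / n) = 2 * π := by field_simp
    simp only [equallySpaced]
    nlinarith

lemma phi_equallySpaced {n : ℕ} (hn : 0 < n) (ζ : ℝ) (j : Fin n) :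
    phi (equallySpaced n ζ) j = 0 := by
  have : NeZero n := ⟨hn.ne'⟩
  have hn' : (n : ℝ) ≠ 0 := by exact_mod_cast hn.ne'
  have key (k : Fin n) :
      Real.cot ((equallySpaced n ζ j - equallySpaced n ζ (j + j - k)) / 2)
        = -Real.cot ((equallySpaced n ζ j - equallySpaced n ζ k) / 2) := by
    obtain ⟨m, hm⟩ : ∃ m : ℤ, (((j + j - k : Fin n) : ℕ) : ℤ) = 2 * (j : ℕ) - (k : ℕ) + m * n := by
      have hk := k.2
      rw [Fin.sub_def, Fin.add_def]
      simp only
      have e1 := Nat.div_add_mod ((j : ℕ) + j) n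
      have e2 := Nat.div_add_mod (n - (k : ℕ) + ((j : ℕ) + j) % n) n
      generalize ((j : ℕ) + j) % n = r at e1 e2 ⊢
      generalize ((j : ℕ) + j) / n = q at e1
      generalize (n - (k : ℕ) + r) % n = s at e2 ⊢
      generalize (n - (k : ℕ) + r) / n = p at e2
      refine ⟨1 - q - p, ?_⟩
      zify [hk.le] at e1 e2
      linarith
    have hm' : (((j + j - k : Fin n) : ℕ) : ℝ) = 2 * (j : ℕ) - (k : ℕ) + m * n := by
      exact_mod_cast hm
    rw [← cot_neg_real, ← cot_add_int_mul_pi _ m]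
    congr 1
    simp only [equallySpaced, hm']
    field_simp
    ring
  have h : phi (equallySpaced n ζ) j = -phi (equallySpaced n ζ) j := by
    conv_lhs => rw [phi_eq_sum, ← Equiv.sum_comp (Equiv.subLeft (j + j))]
    rw [phi_eq_sum, ← Finset.sum_neg_distrib]
    exact Finset.sum_congr rfl fun k _ => key k
  linarith

lemma continuousOn_phi {n : ℕ} (j : Fin n) : ContinuousOn (fun x => phi x j) (Xspace n) := by
  refine continuousOn_finsetSum _ fun k hk => ?_
  simp only [Real.cot_eq_cos_div_sin]
  refine ContinuousOn.div (by fun_prop) (by fun_prop) fun x hx => ?_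
  rcases lt_or_gt_of_ne (Finset.ne_of_mem_erase hk) with h | h
  · have := half_sub_mem_Ioo hx h
    exact (Real.sin_pos_of_pos_of_lt_pi this.1 this.2).ne'
  · have := half_sub_mem_Ioo hx h
    have hs := Real.sin_pos_of_pos_of_lt_pi this.1 this.2
    rw [show (x j - x k) / 2 = -((x k - x j) / 2) by ring, Real.sin_neg]
    exact (neg_neg_of_pos hs).ne

/-- A trajectory of zero energy solves the ODE `dθ/dt = 2φ(θ)`. -/
lemma hasDerivAt_of_mEnergyInf_eq_zero {n : ℕ} {θ : ℝ → Fin n → ℝ}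
    (hcont : ContinuousOn θ (Ici 0)) (hX : ∀ t ∈ Ici (0 : ℝ), θ t ∈ Xspace n)
    (hJ : mEnergyInf n θ = 0) {t : ℝ} (ht : 0 < t) (j : Fin n) :
    HasDerivAt (fun s => θ s j) (2 * phi (θ t) j) t := by
  have hphi (i : Fin n) : ContinuousOn (fun s => 2 * phi (θ s) i) (Ici 0) :=
    continuousOn_const.mul ((continuousOn_phi i).comp hcont hX)
  set T := t + 1 with hT
  have hT0 : 0 ≤ T := by linarith
  have hE : mEnergy n T θ = 0 := le_antisymm (hJ ▸ le_iSup (fun T => mEnergy n T θ) T) zero_le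
  rw [mEnergy] at hE
  split_ifs at hE with hac
  · obtain ⟨v, hv, hθ⟩ := hac
    have hlint := (mul_eq_zero.1 hE).resolve_left (by simp)
    rw [lintegral_eq_zero_iff'] at hlint
    swap
    · refine (Finset.aemeasurable_fun_sum _ fun i _ => ?_).ennreal_ofReal
      refine ((measurable_deriv _).aemeasurable.sub ?_).pow_const 2
      exact ((hphi i).mono fun s hs => hs.1.le).aemeasurable measurableSet_Ioc
    rw [EventuallyEq, ae_restrict_iff' measurableSet_Ioc] at hlint
    have hii : IntervalIntegrable (fun s => v s j) volume 0 T := by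
      rw [intervalIntegrable_iff_integrableOn_Icc_of_le hT0]; exact hv j
    have hvphi : ∀ᵐ s, s ∈ Ioc 0 T → v s j = 2 * phi (θ s) j := by
      filter_upwards [hlint, hii.ae_hasDerivAt_integral, Measure.ae_ne volume T]
        with s h1 h2 h3 hs
      have hlt : s < T := lt_of_le_of_ne hs.2 h3
      have hd : HasDerivAt (fun r => θ r j) (v s j) s := by
        refine ((h2 ?_ 0 left_mem_uIcc).const_add (θ 0 j)).congr_of_eventuallyEq ?_
        · rw [uIcc_of_le hT0]; exact Ioc_subset_Icc_self hs
        · filter_upwards [Ioo_mem_nhds hs.1 hlt] with r hr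
          exact hθ r (Ioo_subset_Icc_self hr) j
      have h4 := h1 hs
      simp only [Pi.zero_apply, ENNReal.ofReal_eq_zero] at h4
      have h5 := (Finset.sum_eq_zero_iff_of_nonneg fun i _ => sq_nonneg _).1
        (le_antisymm h4 (Finset.sum_nonneg fun i _ => sq_nonneg _)) j (Finset.mem_univ j)
      rw [hd.deriv] at h5
      exact sub_eq_zero.1 (pow_eq_zero_iff two_ne_zero |>.1 h5)
    have hint : ∀ s ∈ Ioo 0 T, θ s j = θ 0 j + ∫ r in (0 : ℝ)..s, 2 * phi (θ r) j := by
      intro s hs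
      rw [hθ s (Ioo_subset_Icc_self hs) j]
      congr 1
      refine intervalIntegral.integral_congr_ae ?_
      filter_upwards [hvphi] with r hr hrs
      rw [uIoc_of_le hs.1.le] at hrs
      exact hr ⟨hrs.1, hrs.2.trans hs.2.le⟩
    have hftc : HasDerivAt (fun s => ∫ r in (0 : ℝ)..s, 2 * phi (θ r) j) (2 * phi (θ t) j) t := by
      refine intervalIntegral.integral_hasDerivAt_right ?_ ?_ ?_
      · refine ((hphi j).mono fun s hs => ?_).intervalIntegrable
        rw [uIcc_of_le ht.le] at hs
        exact hs.1
      · exact ((hphi j).mono Ioi_subset_Ici_self).stronglyMeasurableAtFilter isOpen_Ioi t ht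
      · exact (hphi j).continuousAt (Ici_mem_nhds ht)
    refine (hftc.const_add (θ 0 j)).congr_of_eventuallyEq ?_
    filter_upwards [Ioo_mem_nhds ht (by linarith : t < T)] with s hs
    exact hint s hs
  · exact absurd hE (by simp)

/-- If `n ≥ 2` and `θ : [0,∞) → 𝒳ₙ` is continuous with zero
multiradial Dirichlet energy, then `θ_t` converges, exponentially fast with rate `n`,
to a static equally spaced configuration `(ζ, ζ + 2π/n, …, ζ + (n-1)2π/n)`. -/
theorem zero_energy_converges_to_equally_spaced
    (n : ℕ) (hn : 2 ≤ n) (θ : ℝ → Fin n → ℝ)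
    (hcont : ContinuousOn θ (Ici 0))
    (hX : ∀ t ∈ Ici (0 : ℝ), θ t ∈ Xspace n)
    (hJ : mEnergyInf n θ = 0) :
    ∃ ζ C : ℝ, 0 ≤ C ∧
      ∀ t ∈ Ici (0 : ℝ), ∀ j : Fin n,
        |θ t j - (ζ + (j : ℕ) * (2 * π / n))| ≤ C * Real.exp (-(n : ℝ) * t) := by
  have hn0 : 0 < n := by omega
  have hn' : (n : ℝ) ≠ 0 := by exact_mod_cast hn0.ne'
  have hderiv {t : ℝ} (ht : 0 < t) (j : Fin n) :=
    hasDerivAt_of_mEnergyInf_eq_zero hcont hX hJ ht j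
  have hcoord (j : Fin n) : ContinuousOn (fun s => θ s j) (Ici 0) :=
    (continuous_apply j).comp_continuousOn hcont
  -- the barycentre is conserved, and `ζ` is chosen so that it is that of the limit
  obtain ⟨ζ, hζ⟩ : ∃ ζ, ∑ j, (θ 0 j - equallySpaced n ζ j) = 0 := by
    refine ⟨(∑ j, θ 0 j - ∑ j : Fin n, (j : ℕ) * (2 * π / n)) / n, ?_⟩
    simp only [equallySpaced, Finset.sum_sub_distrib, Finset.sum_add_distrib, Finset.sum_const,
      Finset.card_univ, Fintype.card_fin, nsmul_eq_mul]
    rw [mul_div_cancel₀ _ hn']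
    ring
  set y := equallySpaced n ζ with hy
  have hmean : ∀ t ∈ Ici (0 : ℝ), ∑ j, (θ t j - y j) = 0 := by
    intro t ht
    have hd : ∀ s ∈ interior (Ici (0 : ℝ)),
        HasDerivAt (fun s => ∑ j, (θ s j - y j)) 0 s := by
      intro s hs
      rw [interior_Ici] at hs
      have := HasDerivAt.fun_sum (u := Finset.univ) fun j _ => (hderiv hs j).sub_const (y j)
      rwa [← Finset.mul_sum, sum_phi_eq_zero, mul_zero] at this
    have hc : ContinuousOn (fun s => ∑ j, (θ s j - y j)) (Ici 0) :=
      continuousOn_finsetSum _ fun j _ => (hcoord j).sub continuousOn_const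
    have h1 := antitoneOn_of_deriv_nonpos (convex_Ici 0) hc
      (fun s hs => (hd s hs).differentiableAt.differentiableWithinAt)
      (fun s hs => (hd s hs).deriv.le) self_mem_Ici ht ht
    have h2 := monotoneOn_of_deriv_nonneg (convex_Ici 0) hc
      (fun s hs => (hd s hs).differentiableAt.differentiableWithinAt)
      (fun s hs => (hd s hs).deriv.ge) self_mem_Ici ht ht
    exact (le_antisymm h1 h2).trans hζ
  set f : ℝ → ℝ := fun t => ∑ j, (θ t j - y j) ^ 2 with hf
  have hdecay : AntitoneOn (fun t => Real.exp (2 * n * t) * f t) (Ici 0) := by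
    have hd : ∀ s ∈ interior (Ici (0 : ℝ)), HasDerivAt (fun t => Real.exp (2 * n * t) * f t)
        (Real.exp (2 * n * s) * (2 * n * f s +
          2 * ∑ j, (θ s j - y j) * (2 * (phi (θ s) j - phi y j)))) s := by
      intro s hs
      rw [interior_Ici] at hs
      have h1 : HasDerivAt (fun t : ℝ => Real.exp (2 * n * t)) _ s :=
        ((hasDerivAt_id s).const_mul (2 * (n : ℝ))).exp
      have h2 := HasDerivAt.fun_sum (u := Finset.univ)
        fun j _ => ((hderiv hs j).sub_const (y j)).fun_pow 2
      refine (h1.fun_mul h2).congr_deriv ?_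
      have h3 : ∑ j, ((2 : ℕ) : ℝ) * (θ s j - y j) ^ (2 - 1) * (2 * phi (θ s) j)
          = 2 * ∑ j, (θ s j - y j) * (2 * (phi (θ s) j - phi y j)) := by
        rw [Finset.mul_sum]
        refine Finset.sum_congr rfl fun j _ => ?_
        rw [hy, phi_equallySpaced hn0]
        push_cast
        ring
      rw [h3]
      simp only [hf, id]
      ring
    refine antitoneOn_of_deriv_nonpos (convex_Ici 0) ?_
      (fun s hs => (hd s hs).differentiableAt.differentiableWithinAt) fun s hs => ?_
    · exact (by fun_prop : Continuous fun t : ℝ => Real.exp (2 * n * t)).continuousOn.mul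
        (continuousOn_finsetSum _ fun j _ => ((hcoord j).sub continuousOn_const).pow 2)
    · rw [(hd s hs).deriv]
      have hs' : s ∈ Ici (0 : ℝ) := interior_subset hs
      have := sum_sub_mul_phi_sub_le (hX s hs') (equallySpaced_mem hn0 ζ) (hmean s hs')
      exact mul_nonpos_of_nonneg_of_nonpos (Real.exp_pos _).le (by linarith)
  refine ⟨ζ, √(f 0), Real.sqrt_nonneg _, fun t ht j => ?_⟩
  have h1 : Real.exp (2 * n * t) * f t ≤ f 0 := by
    simpa using hdecay self_mem_Ici ht ht
  have h2 : (θ t j - y j) ^ 2 ≤ f t :=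
    Finset.single_le_sum (f := fun j => (θ t j - y j) ^ 2) (fun i _ => sq_nonneg _)
      (Finset.mem_univ j)
  have hf0 : 0 ≤ f 0 := Finset.sum_nonneg fun i _ => sq_nonneg _
  refine abs_le_of_sq_le_sq (h2.trans ?_) (by positivity)
  have h3 : Real.exp (-(n : ℝ) * t) ^ 2 * Real.exp (2 * n * t) = 1 := by
    rw [sq, ← Real.exp_add, ← Real.exp_add, ← Real.exp_zero]; ring_nf
  calc f t = Real.exp (-(n : ℝ) * t) ^ 2 * (Real.exp (2 * n * t) * f t) := by
        rw [← mul_assoc, h3, one_mul]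
    _ ≤ Real.exp (-(n : ℝ) * t) ^ 2 * f 0 := by gcongr
    _ = (√(f 0) * Real.exp (-(n : ℝ) * t)) ^ 2 := by rw [mul_pow, Real.sq_sqrt hf0]; ring

end
end

section
/- Let θ ∈ 𝒳ₙ and let j ∈ {1,…,n} be any index attaining the minimum of θ^{k+1} − θ^k over k ∈ {1,…,n} (with θ^{n+1} = θ¹ + 2π and φ^{n+1} := φ¹). Then φ^{j+1}(θ) − φ^j(θ) ≥ π − n·(θ^{j+1} − θ^j)/2 ≥ 0. -/
open MeasureTheory Filter Set
open scoped Real Topology ENNReal Classical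

noncomputable section

/-- The cyclically next index, with the convention `φ^{n+1} := φ¹`. -/
def succIdx {n : ℕ} (j : Fin n) : Fin n :=
  if h : (j : ℕ) + 1 < n then ⟨(j : ℕ) + 1, h⟩ else ⟨0, j.pos⟩

theorem Real.cot_neg (t : ℝ) : Real.cot (-t) = -Real.cot t := by
  simp [Real.cot_eq_cos_div_sin, div_neg]

theorem Real.cot_zero : Real.cot 0 = 0 := by
  simp [Real.cot_eq_cos_div_sin]

theorem Real.cot_add_nat_mul_pi (t : ℝ) (N : ℕ) : Real.cot (t + N * π) = Real.cot t := by
  rw [Real.cot_eq_cos_div_sin, Real.cot_eq_cos_div_sin, Real.cos_add_nat_mul_pi,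
    Real.sin_add_nat_mul_pi, mul_div_mul_left _ _ (by simp)]

theorem Real.pi_div_two_sub_le_cot {b : ℝ} (hb : 0 < b) (hb' : b ≤ π / 2) :
    π / 2 - b ≤ Real.cot b := by
  have h := Real.le_tan (x := π / 2 - b) (by linarith) (by linarith)
  rwa [Real.tan_eq_sin_div_cos, Real.sin_pi_div_two_sub, Real.cos_pi_div_two_sub,
    ← Real.cot_eq_cos_div_sin] at h

theorem Real.cot_add_sub_cot {u a : ℝ} (hu : Real.sin u ≠ 0) (hua : Real.sin (u + a) ≠ 0) :
    Real.cot (u + a) - Real.cot u = -(Real.sin a / (Real.sin u * Real.sin (u + a))) := by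
  have h : Real.sin a = Real.sin (u + a) * Real.cos u - Real.cos (u + a) * Real.sin u := by
    rw [← Real.sin_sub]
    ring_nf
  rw [Real.cot_eq_cos_div_sin, Real.cot_eq_cos_div_sin, h]
  field_simp
  ring

theorem Real.sin_mul_sin_add_sub (u v a : ℝ) :
    Real.sin u * Real.sin (u + a) - Real.sin v * Real.sin (v + a) =
      Real.sin (u - v) * Real.sin (u + v + a) := by
  simp only [Real.sin_add, Real.sin_sub, Real.cos_add]
  have hu := Real.sin_sq_add_cos_sq u
  have hv := Real.sin_sq_add_cos_sq v
  linear_combination (Real.sin v ^ 2 * Real.cos a + Real.sin v * Real.cos v * Real.sin a) * hu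
    - (Real.sin u ^ 2 * Real.cos a + Real.sin u * Real.cos u * Real.sin a) * hv

/-- The increment of `cot` over an interval of length `a` is smallest near the poles. -/
theorem Real.cot_add_sub_cot_le {l u a : ℝ} (ha : 0 < a) (hl : 0 < l) (hlu : l ≤ u)
    (hul : u ≤ π - a - l) :
    Real.cot (l + a) - Real.cot l ≤ Real.cot (u + a) - Real.cot u := by
  have h₁ : 0 < Real.sin l := Real.sin_pos_of_pos_of_lt_pi hl (by linarith)
  have h₂ : 0 < Real.sin (l + a) := Real.sin_pos_of_pos_of_lt_pi (by linarith) (by linarith)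
  have h₃ : 0 < Real.sin u := Real.sin_pos_of_pos_of_lt_pi (by linarith) (by linarith)
  have h₄ : 0 < Real.sin (u + a) := Real.sin_pos_of_pos_of_lt_pi (by linarith) (by linarith)
  have h₅ : 0 ≤ Real.sin a := Real.sin_nonneg_of_nonneg_of_le_pi ha.le (by linarith)
  have h₆ : 0 ≤ Real.sin (u - l) * Real.sin (u + l + a) :=
    mul_nonneg (Real.sin_nonneg_of_nonneg_of_le_pi (by linarith) (by linarith))
      (Real.sin_nonneg_of_nonneg_of_le_pi (by linarith) (by linarith))
  rw [← Real.sin_mul_sin_add_sub, sub_nonneg] at h₆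
  rw [Real.cot_add_sub_cot h₁.ne' h₂.ne', Real.cot_add_sub_cot h₃.ne' h₄.ne', neg_le_neg_iff]
  exact div_le_div_of_nonneg_left h₅ (mul_pos h₁ h₂) h₆

theorem Real.two_mul_cot_le_cot_add_cot {b h : ℝ} (hh : 0 < h) (hhb : h < b) (hb : b ≤ π / 2) :
    2 * Real.cot b ≤ Real.cot (b + h) + Real.cot (b - h) := by
  have key := Real.cot_add_sub_cot_le (l := b - h) (u := b) hh (by linarith) (by linarith)
    (by linarith)
  rw [sub_add_cancel] at key
  linarith

/-- If the `k`-th of `p` points is at distance at least `(k + 1) a` from `0` and `(p + 1 - k) a`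
from `π`, then the sum of the increments of `cot` over intervals of length `a` starting at these
points is bounded below; the proof compares it with a telescoping sum. -/
theorem two_mul_cot_le_sum {p : ℕ} {a : ℝ} (u : ℕ → ℝ) (ha : 0 < a)
    (hpa : ((p + 2 : ℕ) : ℝ) * a ≤ π)
    (hl : ∀ k < p, ((k + 1 : ℕ) : ℝ) * a ≤ u k)
    (hu : ∀ k < p, u k ≤ π - ((p + 1 : ℕ) - k : ℝ) * a) :
    2 * Real.cot (((p + 2 : ℕ) : ℝ) * a / 2) ≤
      2 * Real.cot a + ∑ k ∈ Finset.range p, (Real.cot (u k + a) - Real.cot (u k)) := by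
  set b : ℝ := ((p + 2 : ℕ) : ℝ) * a / 2 with hb
  push_cast at hb hpa
  let F : ℕ → ℝ := fun k =>
    if 2 * (k + 1) ≤ p + 2 then Real.cot ((k + 1) * a)
    else 2 * Real.cot b - Real.cot ((p + 1 - k) * a)
  have hF : ∀ k < p, F (k + 1) - F k ≤ Real.cot (u k + a) - Real.cot (u k) := by
    intro k hk
    have hlk := hl k hk
    have huk := hu k hk
    push_cast at hlk huk
    have hkp : (k : ℝ) + 1 ≤ p := by exact_mod_cast hk
    have hk0 : (0 : ℝ) ≤ k := Nat.cast_nonneg k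
    rcases lt_trichotomy (2 * k + 1) p with h | h | h
    · have h' : 2 * (k : ℝ) + 2 ≤ p := by exact_mod_cast h
      have e₁ : F (k + 1) = Real.cot ((k + 1) * a + a) := by
        simp only [F]
        rw [if_pos (by omega)]
        push_cast
        ring_nf
      have e₂ : F k = Real.cot ((k + 1) * a) := by
        simp only [F]
        rw [if_pos (by omega)]
      rw [e₁, e₂]
      exact Real.cot_add_sub_cot_le ha (by positivity) hlk (by nlinarith)
    · have h' : 2 * (k : ℝ) + 1 = p := by exact_mod_cast h
      have e₁ : F (k + 1) = 2 * Real.cot b - Real.cot (b - a / 2) := by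
        simp only [F]
        rw [if_neg (by omega), hb, ← h']
        push_cast
        ring_nf
      have e₂ : F k = Real.cot (b - a / 2) := by
        simp only [F]
        rw [if_pos (by omega), hb, ← h']
        ring_nf
      have hba : b - a / 2 = (k + 1) * a := by
        rw [hb, ← h']
        ring
      have key := Real.two_mul_cot_le_cot_add_cot (b := b) (h := a / 2) (by positivity)
        (by nlinarith) (by linarith)
      have inc := Real.cot_add_sub_cot_le (l := b - a / 2) (u := u k) ha
        (by rw [hba]; positivity) (by rw [hba]; exact hlk) (by rw [hba]; nlinarith)
      have e₃ : b - a / 2 + a = b + a / 2 := by ring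
      rw [e₃] at inc
      rw [e₁, e₂]
      linarith
    · have h' : (p : ℝ) ≤ 2 * k := by exact_mod_cast Nat.lt_succ_iff.mp h
      have e₁ : F (k + 1) = 2 * Real.cot b - Real.cot ((p - k) * a) := by
        simp only [F]
        rw [if_neg (by omega)]
        push_cast
        ring_nf
      have e₂ : F k = 2 * Real.cot b - Real.cot ((p - k) * a + a) := by
        simp only [F]
        split_ifs with hc
        · have hc' : (p : ℝ) = 2 * k := by
            have : p = 2 * k := by omega
            exact_mod_cast this
          rw [hb, hc']
          ring_nf
        · ring_nf
      have hpk : 1 ≤ (p : ℝ) - k := by linarith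
      have key := Real.cot_add_sub_cot_le (l := (p - k) * a) (u := u k) ha (by positivity)
        (by nlinarith) (by nlinarith)
      rw [e₁, e₂]
      linarith
  have hsum := Finset.sum_le_sum fun k hk => hF k (Finset.mem_range.mp hk)
  rw [Finset.sum_range_sub] at hsum
  have h0 : F 0 = Real.cot a := by simp [F]
  have hp : F p = 2 * Real.cot b - Real.cot a := by
    simp only [F]
    split_ifs with hc
    · obtain rfl : p = 0 := by omega
      simp only [hb]
      norm_num
      ring
    · ring_nf
  linarith

/-- The extension of `x` to all natural indices with the convention `θ^{i+n} = θ^i + 2π`. -/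
def liftSeq {n : ℕ} (hn : 0 < n) (x : Fin n → ℝ) (i : ℕ) : ℝ :=
  x ⟨i % n, Nat.mod_lt i hn⟩ + 2 * π * (i / n : ℕ)

theorem liftSeq_add_period {n : ℕ} (hn : 0 < n) (x : Fin n → ℝ) (i : ℕ) :
    liftSeq hn x (i + n) = liftSeq hn x i + 2 * π := by
  simp only [liftSeq, Nat.add_mod_right, Nat.add_div_right i hn]
  push_cast
  ring

theorem liftSeq_fin {n : ℕ} (hn : 0 < n) (x : Fin n → ℝ) (i : Fin n) :
    liftSeq hn x i = x i := by
  simp [liftSeq, Nat.mod_eq_of_lt i.isLt, Nat.div_eq_of_lt i.isLt]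

theorem liftSeq_fin_succ {n : ℕ} (hn : 0 < n) (x : Fin n → ℝ) (j : Fin n) :
    liftSeq hn x (j + 1) = nextVal x j := by
  unfold nextVal
  split_ifs with h
  · exact liftSeq_fin hn x ⟨j + 1, h⟩
  · have hjn : (j : ℕ) + 1 = 0 + n := by omega
    rw [hjn, liftSeq_add_period]
    exact congrArg (· + 2 * π) (liftSeq_fin hn x ⟨0, hn⟩)

theorem liftSeq_add_mul_period {n : ℕ} (hn : 0 < n) (x : Fin n → ℝ) (i q : ℕ) :
    liftSeq hn x (i + n * q) = liftSeq hn x i + 2 * π * q := by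
  simp only [liftSeq, Nat.add_mul_mod_self_left, Nat.add_mul_div_left i q hn]
  push_cast
  ring

theorem liftSeq_succ_sub {n : ℕ} (hn : 0 < n) (x : Fin n → ℝ) (i : ℕ) :
    liftSeq hn x (i + 1) - liftSeq hn x i = gap x ⟨i % n, Nat.mod_lt i hn⟩ := by
  have hi := Nat.mod_add_div i n
  have h₁ : liftSeq hn x (i + 1) =
      liftSeq hn x (i % n + 1) + 2 * π * (i / n : ℕ) := by
    rw [← liftSeq_add_mul_period]
    congr 1
    omega
  rw [h₁, gap, ← liftSeq_fin_succ hn]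
  simp only [liftSeq]
  ring

theorem nat_mul_le_liftSeq_sub {n : ℕ} (hn : 0 < n) (x : Fin n → ℝ) {δ : ℝ}
    (hδ : ∀ k, δ ≤ gap x k) (i k : ℕ) :
    k * δ ≤ liftSeq hn x (i + k) - liftSeq hn x i := by
  induction k with
  | zero => simp
  | succ k ih =>
    have h := liftSeq_succ_sub hn x (i + k)
    have h' := hδ ⟨(i + k) % n, Nat.mod_lt _ hn⟩
    rw [← add_assoc]
    push_cast
    linarith

theorem Function.Periodic.sum_range_add {f : ℕ → ℝ} {n : ℕ} (hf : Function.Periodic f n) (s : ℕ) :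
    ∑ k ∈ Finset.range n, f (s + k) = ∑ k ∈ Finset.range n, f k := by
  induction s with
  | zero => simp
  | succ s ih =>
    rw [← ih]
    have h₁ := Finset.sum_range_succ (fun k => f (s + k)) n
    have h₂ := Finset.sum_range_succ' (fun k => f (s + k)) n
    have h₃ : ∀ k, f (s + (k + 1)) = f (s + 1 + k) := fun k => by rw [add_assoc, add_comm 1 k]
    have h₄ := hf s
    simp only [h₃, add_zero] at h₂
    linarith

/-- `φ` as a sum over any window of `n` consecutive points of the lifted configuration. -/
theorem phi_eq_neg_sum {n : ℕ} (hn : 0 < n) (x : Fin n → ℝ) (i : Fin n) (s q : ℕ) :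
    phi x i = -∑ k ∈ Finset.range n,
      Real.cot ((liftSeq hn x (s + k) - (x i + 2 * π * q)) / 2) := by
  have hper : Function.Periodic
      (fun m => Real.cot ((liftSeq hn x m - (x i + 2 * π * q)) / 2)) n := by
    intro m
    have h := Real.cot_add_nat_mul_pi ((liftSeq hn x m - (x i + 2 * π * q)) / 2) 1
    dsimp only
    rw [liftSeq_add_period, ← h]
    push_cast
    ring_nf
  rw [hper.sum_range_add s, Finset.sum_range, phi,
    Finset.sum_erase _ (by simp [Real.cot_zero]), ← Finset.sum_neg_distrib]
  refine Finset.sum_congr rfl fun k _ => ?_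
  rw [liftSeq_fin, ← Real.cot_neg, ← Real.cot_add_nat_mul_pi ((x i - x k) / 2) q]
  ring_nf

theorem gap_pos {n : ℕ} {x : Fin n → ℝ} (hx : x ∈ Xspace n) (j : Fin n) : 0 < gap x j := by
  unfold gap nextVal
  split_ifs with h
  · exact sub_pos.mpr (hx.1 (Fin.lt_def.mpr (Nat.lt_succ_self _)))
  · exact sub_pos.mpr (hx.2 _ _)

theorem nat_mul_gap_le_two_pi {n : ℕ} (hn : 0 < n) (x : Fin n → ℝ) {δ : ℝ}
    (hδ : ∀ k, δ ≤ gap x k) : n * δ ≤ 2 * π := by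
  have h := nat_mul_le_liftSeq_sub hn x hδ 0 n
  rw [liftSeq_add_period] at h
  linarith

theorem nextVal_eq_succIdx {n : ℕ} (x : Fin n → ℝ) (j : Fin n) :
    ∃ q : ℕ, nextVal x j = x (succIdx j) + 2 * π * q := by
  unfold nextVal succIdx
  split_ifs with h
  · exact ⟨0, by simp⟩
  · exact ⟨1, by simp⟩

/-- If `θ ∈ 𝒳ₙ` and `j` attains the minimal gap, then
`φ^{j+1}(θ) - φ^j(θ) ≥ π - n (θ^{j+1} - θ^j)/2 ≥ 0`. -/
theorem phi_difference_estimate_at_min_gap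
    (n : ℕ) (hn : 1 ≤ n) (x : Fin n → ℝ) (hx : x ∈ Xspace n)
    (j : Fin n) (hj : ∀ k : Fin n, gap x j ≤ gap x k) :
    π - n * gap x j / 2 ≤ phi x (succIdx j) - phi x j ∧
      0 ≤ π - n * gap x j / 2 := by
  have hpos : 0 < n := hn
  have hnpi := nat_mul_gap_le_two_pi hpos x hj
  refine ⟨?_, by linarith⟩
  have hgap := gap_pos hx j
  obtain rfl | ⟨p, rfl⟩ : n = 1 ∨ ∃ p, n = p + 2 := by
    obtain rfl | h := Nat.eq_or_lt_of_le hn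
    · exact Or.inl rfl
    · exact Or.inr ⟨n - 2, by omega⟩
  · rw [Subsingleton.elim (succIdx j) j, gap, nextVal, dif_neg (by omega),
      Subsingleton.elim ⟨0, j.pos⟩ j]
    simp
  obtain ⟨q, hq⟩ := nextVal_eq_succIdx x j
  set a : ℝ := gap x j / 2 with ha
  have ha0 : 0 < a := by positivity
  set Θ := liftSeq hpos x with hΘ
  have hΘj : Θ (j + 1) = nextVal x j := liftSeq_fin_succ hpos x j
  have hnext : nextVal x j = x j + 2 * a := by rw [ha, gap]; ring
  have hlow : ∀ i k : ℕ, k * (2 * a) ≤ Θ (i + k) - Θ i := fun i k => by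
    have h2a : 2 * a = gap x j := by rw [ha]; ring
    rw [h2a]
    exact nat_mul_le_liftSeq_sub hpos x hj i k
  have hlast : Θ (j + 1 + (p + 1)) = x j + 2 * π := by
    have h : (j : ℕ) + 1 + (p + 1) = j + (p + 2) := by omega
    rw [h, hΘ, liftSeq_add_period, liftSeq_fin]
  set u : ℕ → ℝ := fun k => (Θ (j + 1 + k) - nextVal x j) / 2 with hu
  have hphi : phi x (succIdx j) - phi x j =
      ∑ k ∈ Finset.range (p + 2), (Real.cot (u k + a) - Real.cot (u k)) := by
    rw [phi_eq_neg_sum hpos x (succIdx j) (j + 1) q, phi_eq_neg_sum hpos x j (j + 1) 0, ← hq,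
      Finset.sum_sub_distrib, neg_sub_neg]
    congr 1
    refine Finset.sum_congr rfl fun k _ => ?_
    simp only [hu, hnext, hΘ]
    push_cast
    ring_nf
  have hu0 : u 0 = 0 := by simp [hu, hΘj]
  have hulast : u (p + 1) = π - a := by
    simp only [hu, hlast, hnext]
    ring
  have hcotpi : ∀ t : ℝ, Real.cot (π + t) = Real.cot t := fun t => by
    simpa [add_comm] using Real.cot_add_nat_mul_pi t 1
  have hcot := two_mul_cot_le_sum (p := p) (fun k => u (k + 1)) ha0
    (by rw [ha]; linarith)
    (fun k _ => by
      have h := hlow (j + 1) (k + 1)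
      rw [hΘj] at h
      simp only [hu]
      linarith)
    (fun k hk => by
      have h := hlow (j + 1 + (k + 1)) (p - k)
      have e : (j : ℕ) + 1 + (k + 1) + (p - k) = j + 1 + (p + 1) := by omega
      rw [e, hlast, Nat.cast_sub hk.le] at h
      simp only [hu, hnext]
      push_cast
      linarith)
  have hb := Real.pi_div_two_sub_le_cot (b := ((p + 2 : ℕ) : ℝ) * a / 2) (by positivity)
    (by rw [ha]; linarith)
  rw [hphi, Finset.sum_range_succ, Finset.sum_range_succ', hu0, hulast, Real.cot_zero,
    sub_add_cancel, zero_add, sub_eq_add_neg π a, hcotpi, Real.cot_neg]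
  have hpi : Real.cot π = 0 := by simp [Real.cot_eq_cos_div_sin]
  rw [hpi]
  have he : ((p + 2 : ℕ) : ℝ) * gap x j / 2 = 2 * (((p + 2 : ℕ) : ℝ) * a / 2) := by
    rw [ha]; ring
  rw [he]
  linarith

end
end

section
/- Let n ≥ 2 and let θ : [0,∞) → 𝒳ₙ be (locally) absolutely continuous with J_T(θ) < ∞ for every T ≥ 0. Then for all t ≥ 0, d(θ_t) ≤ (n−1)·e^{−nt}·( 2√2·∫₀ᵗ e^{ns}·√(j_s(θ)) ds + d(θ_0) ), where j_s(θ) := (1/2)·Σ_{j=1}ⁿ |dθ^j_s/ds − 2φ^j(θ_s)|² is the energy density, so that J_t(θ) = ∫₀ᵗ j_s(θ) ds. -/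
open MeasureTheory Filter Set
open scoped Real Topology ENNReal Classical

noncomputable section

/-- The energy density `j_s(θ) := (1/2) ∑_j |dθ^j_s/ds - 2φ^j(θ_s)|²`. -/
def eDensity {n : ℕ} (θ : ℝ → Fin n → ℝ) (s : ℝ) : ℝ :=
  (1 / 2) * ∑ j, (deriv (fun t => θ t j) s - 2 * phi (θ s) j) ^ 2

/-- On `(0, π)` the cotangent decreases with slope at most `-1`. -/
lemma sub_le_cot_sub_cot {a b : ℝ} (ha : 0 < a) (hab : a ≤ b) (hb : b < π) :
    b - a ≤ Real.cot a - Real.cot b := by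
  have hd (x : ℝ) (hx : x ∈ Ioo 0 π) :
      HasDerivAt (fun y => Real.cos y / Real.sin y + y)
        ((-Real.sin x * Real.sin x - Real.cos x * Real.cos x) / Real.sin x ^ 2 + 1) x :=
    (((Real.hasDerivAt_cos x).div (Real.hasDerivAt_sin x)
      (Real.sin_pos_of_mem_Ioo hx).ne').add (hasDerivAt_id x))
  have hanti : AntitoneOn (fun y => Real.cos y / Real.sin y + y) (Ioo 0 π) := by
    refine antitoneOn_of_deriv_nonpos (convex_Ioo 0 π)
      (fun x hx => (hd x hx).continuousAt.continuousWithinAt)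
      (fun x hx => (hd x (interior_subset hx)).differentiableAt.differentiableWithinAt)
      (fun x hx => ?_)
    rw [(hd x (interior_subset hx)).deriv]
    have hs := Real.sin_pos_of_mem_Ioo (interior_subset hx)
    have h1 := Real.sin_sq_add_cos_sq x
    have h2 : (-Real.sin x * Real.sin x - Real.cos x * Real.cos x) / Real.sin x ^ 2 ≤ -1 := by
      rw [div_le_iff₀ (by positivity)]
      nlinarith [sq_nonneg (Real.cos x)]
    linarith
  have := hanti ⟨ha, hab.trans_lt hb⟩ ⟨ha.trans_le hab, hb⟩ hab
  simp only [Real.cot_eq_cos_div_sin]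
  linarith

lemma cot_add_pi (x : ℝ) : Real.cot (x + π) = Real.cot x := by
  simp [Real.cot_eq_cos_div_sin, Real.sin_add_pi, Real.cos_add_pi, neg_div_neg_eq]

lemma cot_sub_pi (x : ℝ) : Real.cot (x - π) = Real.cot x := by
  rw [← cot_add_pi (x - π), sub_add_cancel]

lemma nextVal_eq_finRotate {n : ℕ} (x : Fin n → ℝ) (j : Fin n) :
    nextVal x j = x (finRotate n j) + if (j : ℕ) + 1 < n then 0 else 2 * π := by
  obtain _ | m := n
  · exact j.elim0
  unfold nextVal
  split_ifs with h
  · rw [add_zero]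
    congr 1
    rw [Fin.ext_iff, coe_finRotate_of_ne_last]
    rintro rfl
    simp at h
  · have : j = Fin.last m := Fin.ext (by simp; omega)
    subst this
    rw [finRotate_last]
    rfl

lemma nextVal_mem_Xspace {n : ℕ} {x : Fin n → ℝ} (hx : x ∈ Xspace n) :
    nextVal x ∈ Xspace n := by
  obtain ⟨hmono, hlt⟩ := hx
  have hpi := Real.pi_pos
  refine ⟨fun i j hij => ?_, fun i j => ?_⟩
  · have hij' : (i : ℕ) < j := hij
    have hi : (i : ℕ) + 1 < n := by omega
    simp only [nextVal, hi, dif_pos]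
    split_ifs with hj
    · exact hmono (Fin.mk_lt_mk.2 (Nat.succ_lt_succ hij'))
    · exact hlt _ _
  · unfold nextVal
    split_ifs with hi hj hj
    · exact hlt _ _
    · linarith [hlt ⟨(i : ℕ) + 1, hi⟩ ⟨0, j.pos⟩]
    · linarith [hmono (Fin.mk_lt_mk (hx := i.pos) (hy := hj) |>.2 (Nat.succ_pos _))]
    · linarith

lemma sum_gap {n : ℕ} (hn : 0 < n) (x : Fin n → ℝ) : ∑ j, gap x j = 2 * π := by
  obtain _ | m := n
  · omega
  simp only [gap, nextVal_eq_finRotate, Finset.sum_sub_distrib, Finset.sum_add_distrib]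
  rw [Equiv.sum_comp (finRotate (m + 1)) x, add_sub_cancel_left,
    Fin.sum_univ_castSucc]
  simp

lemma phi_finRotate {n : ℕ} (x : Fin n → ℝ) (j : Fin n) :
    phi x (finRotate n j) =
      ∑ k ∈ Finset.univ.erase j, Real.cot ((nextVal x j - nextVal x k) / 2) := by
  unfold phi
  symm
  refine Finset.sum_equiv (finRotate n) (by simp) fun k _ => ?_
  rw [nextVal_eq_finRotate x j, nextVal_eq_finRotate x k]
  split_ifs
  · simp
  · rw [← cot_sub_pi ((x (finRotate n j) - x (finRotate n k)) / 2)]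
    congr 1
    ring
  · rw [← cot_add_pi ((x (finRotate n j) - x (finRotate n k)) / 2)]
    congr 1
    ring
  · simp

/-- The deterministic drift pushes a minimal gap towards `2π/n` at rate at least `n`. -/
lemma drift_of_minimal_gap {n : ℕ} {x : Fin n → ℝ} (hx : x ∈ Xspace n) {j : Fin n}
    (hj : ∀ k, gap x j ≤ gap x k) :
    2 * π - n * gap x j ≤ 2 * (phi x (finRotate n j) - phi x j) := by
  have hy := nextVal_mem_Xspace hx
  have hterm : ∀ k ∈ Finset.univ.erase j, (gap x k - gap x j) / 2 ≤
      Real.cot ((nextVal x j - nextVal x k) / 2) - Real.cot ((x j - x k) / 2) := by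
    intro k hk
    have hgap := hj k
    unfold gap at hgap ⊢
    rcases lt_or_gt_of_ne (Finset.ne_of_mem_erase hk) with hkj | hjk
    · have h := sub_le_cot_sub_cot (a := (nextVal x j - nextVal x k) / 2) (b := (x j - x k) / 2)
        (by linarith [hy.1 hkj]) (by linarith) (by linarith [hx.2 j k])
      linarith
    · have h := sub_le_cot_sub_cot (a := (nextVal x j - nextVal x k) / 2 + π)
        (b := (x j - x k) / 2 + π)
        (by linarith [hy.2 k j]) (by linarith) (by linarith [hx.1 hjk])
      rw [cot_add_pi, cot_add_pi] at h
      linarith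
  have hsum := Finset.sum_le_sum hterm
  rw [Finset.sum_sub_distrib, ← phi_finRotate, ← Finset.sum_div, Finset.sum_sub_distrib,
    Finset.sum_const, nsmul_eq_mul, Finset.card_erase_of_mem (Finset.mem_univ j),
    Finset.card_univ, Fintype.card_fin, Nat.cast_pred j.pos] at hsum
  have htot := Finset.add_sum_erase Finset.univ (gap x) (Finset.mem_univ j)
  rw [sum_gap j.pos] at htot
  change _ ≤ phi x (finRotate n j) - phi x j at hsum
  linarith

lemma AbsolutelyContinuousOnInterval.congr {f g : ℝ → ℝ} {a b : ℝ}
    (hf : AbsolutelyContinuousOnInterval f a b) (hfg : EqOn f g (uIcc a b)) :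
    AbsolutelyContinuousOnInterval g a b := by
  refine Tendsto.congr' ?_ hf
  filter_upwards [mem_inf_of_right (mem_principal_self _)] with E hE
  refine Finset.sum_congr rfl fun i hi => ?_
  rw [hfg (hE.1 i hi).1, hfg (hE.1 i hi).2]

lemma AbsolutelyContinuousOnInterval.iSup {ι : Type*} [Fintype ι] [Nonempty ι]
    {f : ι → ℝ → ℝ} {a b : ℝ} (hf : ∀ i, AbsolutelyContinuousOnInterval (f i) a b) :
    AbsolutelyContinuousOnInterval (fun s => ⨆ i, f i s) a b := by
  have hsum : Tendsto (fun E : ℕ × (ℕ → ℝ × ℝ) => ∑ i, ∑ k ∈ Finset.range E.1,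
      dist (f i (E.2 k).1) (f i (E.2 k).2)) (AbsolutelyContinuousOnInterval.totalLengthFilter ⊓
        𝓟 (AbsolutelyContinuousOnInterval.disjWithin a b)) (𝓝 0) := by
    simpa using tendsto_finsetSum Finset.univ fun i _ => hf i
  have hle (s t : ℝ) : (⨆ i, f i s) ≤ (⨆ i, f i t) + ∑ i, dist (f i s) (f i t) := by
    refine ciSup_le fun i => ?_
    have h1 := le_ciSup (Finite.bddAbove_range fun i => f i t) i
    have h2 := Finset.single_le_sum (f := fun i => dist (f i s) (f i t))
      (fun _ _ => dist_nonneg) (Finset.mem_univ i)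
    have h3 := le_abs_self (f i s - f i t)
    simp only [Real.dist_eq] at *
    linarith
  refine squeeze_zero (fun E => Finset.sum_nonneg fun _ _ => dist_nonneg) (fun E => ?_) hsum
  rw [Finset.sum_comm]
  refine Finset.sum_le_sum fun k _ => ?_
  rw [Real.dist_eq, abs_sub_le_iff]
  constructor
  · linarith [hle (E.2 k).1 (E.2 k).2]
  · have h := hle (E.2 k).2 (E.2 k).1
    simp only [dist_comm (f _ (E.2 k).2)] at h
    linarith

/-- Growth bound for a maximum of finitely many absolutely continuous functions, in terms of a
bound on the derivative of whichever function attains the maximum. -/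
lemma iSup_le_iSup_add_integral {ι : Type*} [Fintype ι] [Nonempty ι] {f : ι → ℝ → ℝ}
    {g : ℝ → ℝ} {a b : ℝ} (hab : a ≤ b) (hf : ∀ i, AbsolutelyContinuousOnInterval (f i) a b)
    (hg : IntervalIntegrable g volume a b)
    (hfg : ∀ᵐ s, s ∈ Icc a b → ∀ i, (∀ k, f k s ≤ f i s) → deriv (f i) s ≤ g s) :
    (⨆ i, f i b) ≤ (⨆ i, f i a) + ∫ s in a..b, g s := by
  have hF := AbsolutelyContinuousOnInterval.iSup hf
  have hdiff : ∀ᵐ s, ∀ i, s ∈ uIcc a b → DifferentiableAt ℝ (f i) s :=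
    ae_all_iff.2 fun i => (hf i).ae_differentiableAt
  have hmono : ∫ s in a..b, deriv (fun s => ⨆ i, f i s) s ≤ ∫ s in a..b, g s := by
    refine intervalIntegral.integral_mono_ae_restrict hab hF.intervalIntegrable_deriv hg ?_
    refine (ae_restrict_iff' measurableSet_Icc).2 ?_
    filter_upwards [hfg, hdiff, hF.ae_differentiableAt] with s hs hd hFd hmem
    have hmem' : s ∈ uIcc a b := by rwa [uIcc_of_le hab]
    obtain ⟨i, hi⟩ := Finite.exists_max fun i => f i s
    have hFi : (⨆ k, f k s) = f i s :=
      le_antisymm (ciSup_le hi) (le_ciSup (Finite.bddAbove_range fun i => f i s) i)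
    have hmin : IsLocalMin ((fun s => ⨆ k, f k s) - f i) s := by
      refine Eventually.of_forall fun u => ?_
      simp only [Pi.sub_apply, hFi, sub_self]
      exact sub_nonneg.2 (le_ciSup (Finite.bddAbove_range fun i => f i u) i)
    have hzero := hmin.deriv_eq_zero
    rw [deriv_sub (hFd hmem') (hd i hmem'), sub_eq_zero] at hzero
    rw [hzero]
    exact hs hmem i hi
  rw [hF.integral_deriv_eq_sub] at hmono
  linarith

lemma AbsCont.absolutelyContinuousOnInterval {n : ℕ} {T : ℝ} (hT : 0 ≤ T) {θ : ℝ → Fin n → ℝ}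
    (h : AbsCont T θ) (j : Fin n) :
    AbsolutelyContinuousOnInterval (fun s => θ s j) 0 T := by
  obtain ⟨v, hv, hθ⟩ := h
  have hint : IntervalIntegrable (fun s => v s j) volume 0 T :=
    (intervalIntegrable_iff_integrableOn_Icc_of_le hT).2 (hv j)
  have hc : AbsolutelyContinuousOnInterval (fun _ : ℝ => θ 0 j) 0 T :=
    contDiffOn_const.absolutelyContinuousOnInterval
  refine (hc.add (hint.absolutelyContinuousOnInterval_intervalIntegral
    (c := 0) (by simp))).congr fun s hs => ?_
  rw [uIcc_of_le hT] at hs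
  exact (hθ s hs j).symm

lemma measurable_cot : Measurable Real.cot := by
  have : Real.cot = fun x => Real.cos x / Real.sin x := funext Real.cot_eq_cos_div_sin
  rw [this]
  fun_prop

lemma eDensity_nonneg {n : ℕ} (θ : ℝ → Fin n → ℝ) (s : ℝ) : 0 ≤ eDensity θ s :=
  mul_nonneg (by norm_num) (Finset.sum_nonneg fun _ _ => sq_nonneg _)

lemma abs_deriv_sub_le_sqrt_eDensity {n : ℕ} (θ : ℝ → Fin n → ℝ) (s : ℝ) (j : Fin n) :
    |deriv (fun t => θ t j) s - 2 * phi (θ s) j| ≤ √2 * √(eDensity θ s) := by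
  rw [← Real.sqrt_mul zero_le_two, ← Real.sqrt_sq_eq_abs]
  refine Real.sqrt_le_sqrt ?_
  have := Finset.single_le_sum
    (f := fun j => (deriv (fun t => θ t j) s - 2 * phi (θ s) j) ^ 2)
    (fun _ _ => sq_nonneg _) (Finset.mem_univ j)
  unfold eDensity
  linarith

lemma aemeasurable_eDensity {n : ℕ} {T : ℝ} {θ : ℝ → Fin n → ℝ}
    (hc : ∀ j, ContinuousOn (fun s => θ s j) (Ioc 0 T)) :
    AEMeasurable (eDensity θ) (volume.restrict (Ioc 0 T)) := by
  have hθ (j : Fin n) : AEMeasurable (fun s => θ s j) (volume.restrict (Ioc 0 T)) :=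
    (hc j).aemeasurable measurableSet_Ioc
  unfold eDensity phi
  refine (Finset.aemeasurable_fun_sum _ fun j _ => AEMeasurable.pow_const (AEMeasurable.sub
    (measurable_deriv _).aemeasurable ((Finset.aemeasurable_fun_sum _ fun k _ => ?_).const_mul 2))
    2).const_mul _
  exact measurable_cot.comp_aemeasurable (((hθ j).sub (hθ k)).div_const 2)

lemma absCont_of_mEnergy_lt_top {n : ℕ} {T : ℝ} {θ : ℝ → Fin n → ℝ} (h : mEnergy n T θ < ⊤) :
    AbsCont T θ := by
  by_contra hne
  simp [mEnergy, hne] at h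

lemma intervalIntegrable_exp_mul_sqrt_eDensity {n : ℕ} {T : ℝ} (hT : 0 ≤ T)
    {θ : ℝ → Fin n → ℝ} (h : mEnergy n T θ < ⊤) (c : ℝ) :
    IntervalIntegrable (fun s => Real.exp (c * s) * √(eDensity θ s)) volume 0 T := by
  have hac := absCont_of_mEnergy_lt_top h
  have hmeas : AEMeasurable (eDensity θ) (volume.restrict (Ioc 0 T)) :=
    aemeasurable_eDensity fun j => ((hac.absolutelyContinuousOnInterval hT j).continuousOn.mono
      (by rw [uIcc_of_le hT]; exact Ioc_subset_Icc_self))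
  have hint : IntegrableOn (eDensity θ) (Ioc 0 T) := by
    refine ⟨hmeas.aestronglyMeasurable, ?_⟩
    rw [hasFiniteIntegral_iff_ofReal (Eventually.of_forall (eDensity_nonneg θ))]
    rw [mEnergy, if_pos hac, ← lintegral_const_mul' _ _ ENNReal.ofReal_ne_top] at h
    simpa only [eDensity, ENNReal.ofReal_mul (show (0 : ℝ) ≤ 1 / 2 by norm_num)] using h
  have hsqrt : IntegrableOn (fun s => √(eDensity θ s)) (Ioc 0 T) := by
    refine ((integrable_const (1 : ℝ)).add hint).mono' hmeas.sqrt.aestronglyMeasurable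
      (Eventually.of_forall fun s => ?_)
    rw [Real.norm_eq_abs, abs_of_nonneg (Real.sqrt_nonneg _), Pi.add_apply, Real.sqrt_le_left
      (by linarith [eDensity_nonneg θ s])]
    nlinarith [eDensity_nonneg θ s]
  exact ((intervalIntegrable_iff_integrableOn_Ioc_of_le hT).2 hsqrt).continuousOn_mul
    (by fun_prop)

/-- The largest deficit of a gap with respect to `2π/n` controls every deviation. -/
lemma dGap_le_mul_iSup {n : ℕ} (hn : 2 ≤ n) (x : Fin n → ℝ) :
    dGap x ≤ ((n : ℝ) - 1) * ⨆ j, (2 * π / n - gap x j) := by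
  have : Nonempty (Fin n) := ⟨⟨0, by omega⟩⟩
  have hn' : (2 : ℝ) ≤ n := by exact_mod_cast hn
  set b := ⨆ j, (2 * π / n - gap x j)
  have hle (j : Fin n) : 2 * π / n - gap x j ≤ b :=
    le_ciSup (Finite.bddAbove_range fun j => 2 * π / n - gap x j) j
  have hsum : ∑ j, (2 * π / n - gap x j) = 0 := by
    rw [Finset.sum_sub_distrib, sum_gap (by omega), Finset.sum_const, Finset.card_univ,
      Fintype.card_fin, nsmul_eq_mul]
    field_simp
    ring
  have herase (j : Fin n) : -(2 * π / n - gap x j) ≤ (n - 1) * b := by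
    have h1 := Finset.add_sum_erase Finset.univ (fun j => 2 * π / n - gap x j) (Finset.mem_univ j)
    have h2 := Finset.sum_le_card_nsmul (Finset.univ.erase j) (fun j => 2 * π / n - gap x j) b
      fun k _ => hle k
    rw [nsmul_eq_mul, Finset.card_erase_of_mem (Finset.mem_univ j),
      Finset.card_univ, Fintype.card_fin, Nat.cast_pred j.pos] at h2
    linarith
  have hb0 : 0 ≤ b := by
    have j : Fin n := Classical.arbitrary _
    nlinarith [hle j, herase j]
  refine ciSup_le fun j => abs_le'.2 ⟨?_, herase j⟩
  nlinarith [hle j]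

lemma iSup_deficit_le_dGap {n : ℕ} (hn : 0 < n) (x : Fin n → ℝ) :
    ⨆ j, (2 * π / n - gap x j) ≤ dGap x := by
  have : Nonempty (Fin n) := ⟨⟨0, hn⟩⟩
  exact ciSup_mono (Finite.bddAbove_range _) fun j => le_abs_self _

/-- At a time when gap `j` is minimal, its rescaled deficit grows at most at the rate allowed by
the energy density. -/
lemma deriv_exp_mul_deficit_le {n : ℕ} {θ : ℝ → Fin n → ℝ} {s : ℝ} (hx : θ s ∈ Xspace n)
    (hd : ∀ j, DifferentiableAt ℝ (fun t => θ t j) s) {j : Fin n}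
    (hj : ∀ k, gap (θ s) j ≤ gap (θ s) k) :
    deriv (fun t => Real.exp (n * t) * (2 * π / n - gap (θ t) j)) s ≤
      2 * √2 * (Real.exp (n * s) * √(eDensity θ s)) := by
  have hn : (n : ℝ) ≠ 0 := by exact_mod_cast j.pos.ne'
  have hexp : HasDerivAt (fun t : ℝ => Real.exp (n * t)) (Real.exp (n * s) * n) s := by
    simpa using ((hasDerivAt_id s).const_mul (n : ℝ)).exp
  have hgap : HasDerivAt (fun t => gap (θ t) j)
      (deriv (fun t => θ t (finRotate n j)) s - deriv (fun t => θ t j) s) s := by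
    simp only [gap, nextVal_eq_finRotate]
    exact ((hd _).hasDerivAt.add_const _).sub (hd j).hasDerivAt
  rw [(hexp.fun_mul (hgap.const_sub (2 * π / n))).deriv]
  have hdrift := drift_of_minimal_gap hx hj
  have h1 := neg_le_of_abs_le (abs_deriv_sub_le_sqrt_eDensity θ s (finRotate n j))
  have h2 := le_of_abs_le (abs_deriv_sub_le_sqrt_eDensity θ s j)
  have hmul : n * (2 * π / n - gap (θ s) j) = 2 * π - n * gap (θ s) j := by
    field_simp
  have key : n * (2 * π / n - gap (θ s) j)
      - (deriv (fun t => θ t (finRotate n j)) s - deriv (fun t => θ t j) s) ≤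
        2 * √2 * √(eDensity θ s) := by
    rw [hmul]
    linarith
  nlinarith [mul_le_mul_of_nonneg_left key (Real.exp_pos (n * s)).le]

/-- For a locally finite-energy system,
`d(θ_t) ≤ (n-1) e^{-nt} (2√2 ∫₀ᵗ e^{ns} √(j_s(θ)) ds + d(θ_0))`. -/
theorem finite_energy_gap_estimate
    (n : ℕ) (hn : 2 ≤ n) (θ : ℝ → Fin n → ℝ)
    (hX : ∀ t ∈ Ici (0 : ℝ), θ t ∈ Xspace n)
    (hJ : ∀ T : ℝ, 0 ≤ T → mEnergy n T θ < ⊤) :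
    ∀ t ∈ Ici (0 : ℝ),
      dGap (θ t) ≤ ((n : ℝ) - 1) * Real.exp (-(n : ℝ) * t) *
        (2 * Real.sqrt 2 * (∫ s in (0 : ℝ)..t, Real.exp (n * s) * Real.sqrt (eDensity θ s))
          + dGap (θ 0)) := by
  intro t ht
  have ht0 : 0 ≤ t := ht
  have : Nonempty (Fin n) := ⟨⟨0, by omega⟩⟩
  have hn1 : (0 : ℝ) ≤ (n : ℝ) - 1 := by
    have : (2 : ℝ) ≤ n := by exact_mod_cast hn
    linarith
  have hac (j : Fin n) :=
    (absCont_of_mEnergy_lt_top (hJ t ht0)).absolutelyContinuousOnInterval ht0 j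
  have hconst (c : ℝ) : AbsolutelyContinuousOnInterval (fun _ : ℝ => c) 0 t :=
    contDiffOn_const.absolutelyContinuousOnInterval
  have hexp : AbsolutelyContinuousOnInterval (fun s : ℝ => Real.exp (n * s)) 0 t :=
    ContDiffOn.absolutelyContinuousOnInterval (by fun_prop)
  have hf (j : Fin n) : AbsolutelyContinuousOnInterval
      (fun s => Real.exp (n * s) * (2 * π / n - gap (θ s) j)) 0 t := by
    simp only [gap, nextVal_eq_finRotate]
    exact hexp.fun_mul ((hconst _).fun_sub (((hac _).fun_add (hconst _)).fun_sub (hac j)))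
  have hdiff : ∀ᵐ s, ∀ j, s ∈ uIcc 0 t → DifferentiableAt ℝ (fun u => θ u j) s :=
    ae_all_iff.2 fun j => (hac j).ae_differentiableAt
  have hgrowth := iSup_le_iSup_add_integral ht0 hf
    ((intervalIntegrable_exp_mul_sqrt_eDensity ht0 (hJ t ht0) n).const_mul (2 * √2)) (by
      filter_upwards [hdiff] with s hs hmem j hj
      refine deriv_exp_mul_deficit_le (hX s hmem.1)
        (fun k => hs k (by rwa [uIcc_of_le ht0])) fun k => ?_
      linarith [le_of_mul_le_mul_left (hj k) (Real.exp_pos (n * s))])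
  rw [intervalIntegral.integral_const_mul, ← Real.mul_iSup_of_nonneg (Real.exp_pos _).le] at hgrowth
  simp only [mul_zero, Real.exp_zero, one_mul] at hgrowth
  have hinit := iSup_deficit_le_dGap (by omega : 0 < n) (θ 0)
  calc dGap (θ t) ≤ ((n : ℝ) - 1) * ⨆ j, (2 * π / n - gap (θ t) j) := dGap_le_mul_iSup hn _
    _ = ((n : ℝ) - 1) * Real.exp (-(n : ℝ) * t) *
        (Real.exp (n * t) * ⨆ j, (2 * π / n - gap (θ t) j)) := by
      rw [mul_assoc, ← mul_assoc (Real.exp _), ← Real.exp_add, neg_mul, neg_add_cancel,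
        Real.exp_zero, one_mul]
    _ ≤ _ := by
      refine mul_le_mul_of_nonneg_left ?_ (mul_nonneg hn1 (Real.exp_pos _).le)
      linarith

end
end

section
/- Fix T > 0, a > 0, and let θ : [0,T] → ℝⁿ be continuous with θ_0 ∈ 𝒳ₙ and θ¹_t ≤ θ²_t ≤ ⋯ ≤ θⁿ_t ≤ θ¹_t + 2π for all t ∈ [0,T]. Let τ_coll := inf{ t ∈ [0,T] : min_{1≤j≤n}(θ^{j+1}_t − θ^j_t) = 0 } (with θ^{n+1} = θ¹ + 2π, and τ_coll := ∞ if no such t exists). Then: (i) if τ_coll ≤ T, then sup_{t < τ_coll} J^a_t(θ) = ∞; (ii) if τ_coll > T (so θ takes values in 𝒳ₙ on [0,T]), then J^a_T(θ) < ∞ if and only if E_T(θ^j) < ∞ for every j ∈ {1,…,n}. -/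
open MeasureTheory Filter Set
open scoped Real Topology ENNReal Classical

noncomputable section

/-- Truncated multiradial Dirichlet energy with parameter `a`, defined to be `∞`
unless `θ` takes values in `𝒳ₙ` on `[0,T]` and is absolutely continuous. -/
def mEnergyAX (n : ℕ) (a T : ℝ) (θ : ℝ → Fin n → ℝ) : ℝ≥0∞ :=
  if (∀ t ∈ Icc (0 : ℝ) T, θ t ∈ Xspace n) ∧ AbsCont T θ then
    ENNReal.ofReal (1 / 2) *
      ∫⁻ s in Ioc (0 : ℝ) T,
        ENNReal.ofReal (∑ j, (deriv (fun t => θ t j) s - 2 * phiA a (θ s) j) ^ 2)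
  else ⊤

/-- Absolute continuity of a scalar function on `[0,T]`. -/
def AbsCont1 (T : ℝ) (f : ℝ → ℝ) : Prop :=
  ∃ v : ℝ → ℝ, IntegrableOn v (Icc 0 T) ∧
    ∀ t ∈ Icc (0 : ℝ) T, f t = f 0 + ∫ s in (0 : ℝ)..t, v s

/-- Dirichlet energy of a scalar function on `[0,T]`. -/
def dEnergy1 (T : ℝ) (f : ℝ → ℝ) : ℝ≥0∞ :=
  if AbsCont1 T f then
    ENNReal.ofReal (1 / 2) * ∫⁻ s in Ioc (0 : ℝ) T, ENNReal.ofReal (deriv f s ^ 2)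
  else ⊤

/-- A function whose increments are dominated by those of an absolutely continuous function is
absolutely continuous. -/
lemma AbsolutelyContinuousOnInterval.of_dist_le {f g : ℝ → ℝ} {a b K : ℝ}
    (hf : AbsolutelyContinuousOnInterval f a b)
    (hg : ∀ x ∈ uIcc a b, ∀ y ∈ uIcc a b, dist (g x) (g y) ≤ K * dist (f x) (f y)) :
    AbsolutelyContinuousOnInterval g a b := by
  unfold AbsolutelyContinuousOnInterval at *
  refine squeeze_zero' (Eventually.of_forall fun E => Finset.sum_nonneg fun i _ => dist_nonneg)
    ?_ (by simpa using hf.const_mul K)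
  have hmem : ∀ᶠ E in AbsolutelyContinuousOnInterval.totalLengthFilter ⊓
      𝓟 (AbsolutelyContinuousOnInterval.disjWithin a b),
      E ∈ AbsolutelyContinuousOnInterval.disjWithin a b :=
    mem_inf_of_right (mem_principal_self _)
  filter_upwards [hmem] with E hE
  rw [Finset.mul_sum]
  exact Finset.sum_le_sum fun i hi => hg _ (hE.1 i hi).1 _ (hE.1 i hi).2

lemma AbsCont1.absolutelyContinuousOnInterval {T : ℝ} {f : ℝ → ℝ} (hT : 0 ≤ T)
    (hf : AbsCont1 T f) : AbsolutelyContinuousOnInterval f 0 T := by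
  obtain ⟨v, hv, hfv⟩ := hf
  have hi : IntervalIntegrable v volume 0 T :=
    (intervalIntegrable_iff_integrableOn_Icc_of_le hT).2 hv
  refine (hi.absolutelyContinuousOnInterval_intervalIntegral (left_mem_uIcc)).of_dist_le
    (K := 1) fun x hx y hy => ?_
  rw [uIcc_of_le hT] at hx hy
  rw [hfv x hx, hfv y hy, dist_add_left, one_mul]

lemma absCont_iff_forall_absCont1 {n : ℕ} {T : ℝ} {θ : ℝ → Fin n → ℝ} :
    AbsCont T θ ↔ ∀ j, AbsCont1 T (fun t => θ t j) := by
  constructor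
  · rintro ⟨v, hv, h⟩ j
    exact ⟨fun s => v s j, hv j, fun t ht => h t ht j⟩
  · intro h
    choose v hv h using h
    exact ⟨fun s j => v j s, hv, fun t ht j => h j t ht⟩

/-- The product of `sin((θ^j - θ^k)/2)` over all ordered pairs `j ≠ k`. -/
def sinProd {n : ℕ} (x : Fin n → ℝ) : ℝ :=
  ∏ j, ∏ k ∈ Finset.univ.erase j, Real.sin ((x j - x k) / 2)

lemma continuous_sinProd {n : ℕ} : Continuous (sinProd (n := n)) := by
  unfold sinProd
  fun_prop

lemma Xspace.sin_ne_zero {n : ℕ} {x : Fin n → ℝ} (hx : x ∈ Xspace n) {j k : Fin n} (hjk : k ≠ j) :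
    Real.sin ((x j - x k) / 2) ≠ 0 := by
  have h1 := hx.2 j k
  have h2 := hx.2 k j
  have hne : x j ≠ x k := fun h => hjk (hx.1.injective h).symm
  rcases lt_or_gt_of_ne hne with h | h
  · exact (Real.sin_neg_of_neg_of_neg_pi_lt (by linarith) (by linarith)).ne
  · exact (Real.sin_pos_of_pos_of_lt_pi (by linarith) (by linarith)).ne'

lemma Xspace.sinProd_ne_zero {n : ℕ} {x : Fin n → ℝ} (hx : x ∈ Xspace n) : sinProd x ≠ 0 :=
  Finset.prod_ne_zero_iff.2 fun _ _ => Finset.prod_ne_zero_iff.2 fun _ hk =>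
    Xspace.sin_ne_zero hx (Finset.ne_of_mem_erase hk)

lemma Xspace.log_sinProd {n : ℕ} {x : Fin n → ℝ} (hx : x ∈ Xspace n) :
    Real.log (sinProd x) =
      ∑ j, ∑ k ∈ Finset.univ.erase j, Real.log (Real.sin ((x j - x k) / 2)) := by
  have hne : ∀ j ∈ Finset.univ, ∏ k ∈ Finset.univ.erase j, Real.sin ((x j - x k) / 2) ≠ 0 :=
    fun j _ => Finset.prod_ne_zero_iff.2 fun k hk =>
      Xspace.sin_ne_zero hx (Finset.ne_of_mem_erase hk)
  rw [sinProd, Real.log_prod hne]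
  exact Finset.sum_congr rfl fun j _ => Real.log_prod fun k hk =>
    Xspace.sin_ne_zero hx (Finset.ne_of_mem_erase hk)

lemma sinProd_eq_zero_of_minGap_eq_zero {n : ℕ} (hn : 1 ≤ n) {x : Fin n → ℝ}
    (hx : minGap x = 0) : sinProd x = 0 := by
  have : Nonempty (Fin n) := ⟨⟨0, hn⟩⟩
  obtain ⟨j, hj⟩ := exists_eq_ciInf_of_finite (f := fun j : Fin n => gap x j)
  replace hj : gap x j = 0 := hj.trans hx
  have key : ∀ k : Fin n, k ≠ j → Real.sin ((x j - x k) / 2) = 0 → sinProd x = 0 :=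
    fun k hk h => Finset.prod_eq_zero (Finset.mem_univ j)
      (Finset.prod_eq_zero (Finset.mem_erase.2 ⟨hk, Finset.mem_univ k⟩) h)
  unfold gap nextVal at hj
  split_ifs at hj with h
  · refine key ⟨j + 1, h⟩ (by simp [Fin.ext_iff]) ?_
    rw [show (x j - x ⟨j + 1, h⟩) / 2 = 0 by linarith, Real.sin_zero]
  · by_cases hj0 : (⟨0, j.pos⟩ : Fin n) = j
    · rw [hj0] at hj
      linarith [Real.pi_pos]
    · refine key ⟨0, j.pos⟩ hj0 ?_
      rw [show (x j - x ⟨0, j.pos⟩) / 2 = π by linarith, Real.sin_pi]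

lemma mem_Xspace_of_minGap_ne_zero {n : ℕ} {x : Fin n → ℝ}
    (hmono : ∀ i j : Fin n, i ≤ j → x i ≤ x j) (hwrap : ∀ i j : Fin n, x i ≤ x j + 2 * π)
    (hx : minGap x ≠ 0) : x ∈ Xspace n := by
  have hnn : ∀ j, 0 ≤ gap x j := by
    intro j
    unfold gap nextVal
    split_ifs with h
    · linarith [hmono j ⟨j + 1, h⟩ (by simp [Fin.le_def])]
    · linarith [hwrap j ⟨0, j.pos⟩]
  have hpos : ∀ j, 0 < gap x j := by
    intro j
    refine (hnn j).lt_of_ne fun h => hx (le_antisymm ?_ (Real.iInf_nonneg hnn))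
    exact (ciInf_le (Set.finite_range _).bddBelow j).trans_eq h.symm
  refine ⟨fun i j hij => ?_, fun i j => ?_⟩
  · have hlt : (i : ℕ) + 1 < n := by omega
    have h := hpos i
    simp only [gap, nextVal, dif_pos hlt] at h
    linarith [hmono ⟨i + 1, hlt⟩ j (by simp only [Fin.le_def]; omega)]
  · have hlast : n - 1 < n := Nat.sub_lt i.pos one_pos
    have h := hpos ⟨n - 1, hlast⟩
    have hnlt : ¬ (n - 1 + 1 < n) := by omega
    simp only [gap, nextVal, dif_neg hnlt] at h
    linarith [hmono i ⟨n - 1, hlast⟩ (by simp only [Fin.le_def]; omega),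
      hmono ⟨0, i.pos⟩ j (by simp [Fin.le_def])]

/-- `log ∘ sin ∘ u` is absolutely continuous when `u` is and avoids the zeros of `sin`. -/
lemma AbsolutelyContinuousOnInterval.log_sin {u : ℝ → ℝ} {a b : ℝ}
    (hu : AbsolutelyContinuousOnInterval u a b) (h : ∀ s ∈ uIcc a b, Real.sin (u s) ≠ 0) :
    AbsolutelyContinuousOnInterval (fun s => Real.log (Real.sin (u s))) a b := by
  have hcompact : IsCompact (u '' uIcc a b) := isCompact_uIcc.image_of_continuousOn hu.continuousOn
  have hconv : Convex ℝ (u '' uIcc a b) :=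
    (isPreconnected_uIcc.image u hu.continuousOn).ordConnected.convex
  have hsmooth : ContDiffOn ℝ 1 (fun y => Real.log (Real.sin y)) (u '' uIcc a b) := by
    refine Real.contDiff_sin.contDiffOn.log ?_
    rintro _ ⟨s, hs, rfl⟩
    exact h s hs
  obtain ⟨K, hK⟩ := hsmooth.exists_lipschitzOnWith (by decide) hconv hcompact
  exact hu.of_dist_le fun x hx y hy =>
    hK.dist_le_mul _ (mem_image_of_mem u hx) _ (mem_image_of_mem u hy)

lemma sum_mul_phi {n : ℕ} (x v : Fin n → ℝ) :
    ∑ j, ∑ k ∈ Finset.univ.erase j, Real.cot ((x j - x k) / 2) * ((v j - v k) / 2) =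
      ∑ j, v j * phi x j := by
  have hanti : ∀ j k, Real.cot ((x k - x j) / 2) = -Real.cot ((x j - x k) / 2) := by
    intro j k
    rw [show (x k - x j) / 2 = -((x j - x k) / 2) by ring, Real.cot_eq_cos_div_sin,
      Real.cot_eq_cos_div_sin, Real.cos_neg, Real.sin_neg, div_neg]
  have hswap : ∑ j, ∑ k ∈ Finset.univ.erase j, Real.cot ((x j - x k) / 2) * v k =
      -∑ j, ∑ k ∈ Finset.univ.erase j, Real.cot ((x j - x k) / 2) * v j := by
    rw [Finset.sum_comm' (t' := Finset.univ) (s' := fun k => Finset.univ.erase k)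
      (by intro j k; simp [ne_comm]), ← Finset.sum_neg_distrib]
    refine Finset.sum_congr rfl fun j _ => ?_
    rw [← Finset.sum_neg_distrib]
    exact Finset.sum_congr rfl fun k _ => by rw [hanti j k, neg_mul]
  have hphi : ∑ j, v j * phi x j =
      ∑ j, ∑ k ∈ Finset.univ.erase j, Real.cot ((x j - x k) / 2) * v j :=
    Finset.sum_congr rfl fun j _ => by
      rw [phi, Finset.mul_sum]
      exact Finset.sum_congr rfl fun k _ => mul_comm _ _
  have hsplit : ∀ j k, Real.cot ((x j - x k) / 2) * ((v j - v k) / 2) =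
      (1 / 2) * (Real.cot ((x j - x k) / 2) * v j) -
        (1 / 2) * (Real.cot ((x j - x k) / 2) * v k) := fun j k => by ring
  simp only [hsplit, Finset.sum_sub_distrib, ← Finset.mul_sum, hswap, hphi]
  ring

lemma neg_two_mul_sum_mul_phi_le {n : ℕ} (a : ℝ) (x v : Fin n → ℝ) :
    -2 * a * ∑ j, v j * phi x j ≤ ∑ j, (v j - 2 * phiA a x j) ^ 2 := by
  rw [Finset.mul_sum]
  refine Finset.sum_le_sum fun j _ => ?_
  unfold phiA
  nlinarith [sq_nonneg (v j + a / 2 * phi x j)]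

lemma ofReal_integral_le_lintegral_ofReal {α : Type*} {m : MeasurableSpace α} {μ : Measure α}
    {f : α → ℝ} (hf : Integrable f μ) :
    ENNReal.ofReal (∫ x, f x ∂μ) ≤ ∫⁻ x, ENNReal.ofReal (f x) ∂μ := by
  rw [integral_eq_lintegral_pos_part_sub_lintegral_neg_part hf]
  refine (ENNReal.ofReal_le_ofReal (sub_le_self _ ENNReal.toReal_nonneg)).trans ?_
  exact ENNReal.ofReal_toReal_le

/-- The energy controls the increase of the potential `-log (sinProd θ)`. -/
lemma ofReal_log_sinProd_sub_le_mEnergyAX {n : ℕ} {a t : ℝ} {θ : ℝ → Fin n → ℝ}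
    (ht : 0 ≤ t) (hX : ∀ s ∈ Icc (0 : ℝ) t, θ s ∈ Xspace n) :
    ENNReal.ofReal (a * (Real.log (sinProd (θ 0)) - Real.log (sinProd (θ t)))) ≤
      mEnergyAX n a t θ := by
  unfold mEnergyAX
  split_ifs with hcond
  swap
  · exact le_top
  have hAC : ∀ j, AbsolutelyContinuousOnInterval (fun s => θ s j) 0 t := fun j =>
    (absCont_iff_forall_absCont1.1 hcond.2 j).absolutelyContinuousOnInterval ht
  have hACg : ∀ j, ∀ k ∈ Finset.univ.erase j, AbsolutelyContinuousOnInterval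
      (fun s => Real.log (Real.sin ((θ s j - θ s k) / 2))) 0 t := by
    intro j k hk
    refine AbsolutelyContinuousOnInterval.log_sin ?_ ?_
    · refine (((hAC j).sub (hAC k)).const_mul (1 / 2)).of_dist_le (K := 1) fun x _ y _ => ?_
      simp only [Pi.sub_apply, Real.dist_eq, one_mul]
      exact le_of_eq (by congr 1; ring)
    · rw [uIcc_of_le ht]
      exact fun s hs => Xspace.sin_ne_zero (hX s hs) (Finset.ne_of_mem_erase hk)
  set G : ℝ → ℝ := fun s => ∑ j, ∑ k ∈ Finset.univ.erase j,
    deriv (fun r => Real.log (Real.sin ((θ r j - θ r k) / 2))) s with hG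
  have hGjint : ∀ j, IntervalIntegrable (fun s => ∑ k ∈ Finset.univ.erase j,
      deriv (fun r => Real.log (Real.sin ((θ r j - θ r k) / 2))) s) volume 0 t := by
    intro j
    convert! IntervalIntegrable.sum _ fun k hk => (hACg j k hk).intervalIntegrable_deriv using 1
    ext s
    simp
  have hGint : IntervalIntegrable G volume 0 t := by
    convert! IntervalIntegrable.sum Finset.univ fun j _ => hGjint j using 1
    ext s
    simp [hG]
  have hGval : ∫ s in (0 : ℝ)..t, G s =
      Real.log (sinProd (θ t)) - Real.log (sinProd (θ 0)) := by
    rw [Xspace.log_sinProd (hX t (right_mem_Icc.2 ht)),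
      Xspace.log_sinProd (hX 0 (left_mem_Icc.2 ht)), hG,
      intervalIntegral.integral_finsetSum fun j _ => hGjint j, ← Finset.sum_sub_distrib]
    refine Finset.sum_congr rfl fun j _ => ?_
    rw [intervalIntegral.integral_finsetSum fun k hk =>
        (hACg j k hk).intervalIntegrable_deriv, ← Finset.sum_sub_distrib]
    exact Finset.sum_congr rfl fun k hk => (hACg j k hk).integral_deriv_eq_sub
  have hle : ∀ᵐ s ∂volume.restrict (Ioc 0 t), -2 * a * G s ≤
      ∑ j, (deriv (fun r => θ r j) s - 2 * phiA a (θ s) j) ^ 2 := by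
    have hd : ∀ᵐ s, ∀ j, s ∈ uIcc 0 t → DifferentiableAt ℝ (fun r => θ r j) s :=
      ae_all_iff.2 fun j => (hAC j).ae_differentiableAt
    rw [ae_restrict_iff' measurableSet_Ioc]
    filter_upwards [hd] with s hs hmem
    have hsI : s ∈ Icc 0 t := Ioc_subset_Icc_self hmem
    rw [uIcc_of_le ht] at hs
    have hGs : G s = ∑ j, deriv (fun r => θ r j) s * phi (θ s) j := by
      rw [← sum_mul_phi]
      refine Finset.sum_congr rfl fun j _ => Finset.sum_congr rfl fun k hk => ?_
      have h1 := (((hs j hsI).hasDerivAt.sub (hs k hsI).hasDerivAt).div_const 2).sin.log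
        (Xspace.sin_ne_zero (hX s hsI) (Finset.ne_of_mem_erase hk))
      refine h1.deriv.trans ?_
      rw [Real.cot_eq_cos_div_sin]
      simp only [Pi.sub_apply]
      ring
    rw [hGs]
    exact neg_two_mul_sum_mul_phi_le a (θ s) _
  have hmain : ENNReal.ofReal (-2 * a * ∫ s in (0 : ℝ)..t, G s) ≤
      ∫⁻ s in Ioc (0 : ℝ) t,
        ENNReal.ofReal (∑ j, (deriv (fun r => θ r j) s - 2 * phiA a (θ s) j) ^ 2) := by
    rw [intervalIntegral.integral_of_le ht, ← integral_const_mul]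
    exact (ofReal_integral_le_lintegral_ofReal (hGint.1.const_mul _)).trans
      (lintegral_mono_ae (hle.mono fun s hs => ENNReal.ofReal_le_ofReal hs))
  refine le_trans (le_of_eq ?_) (mul_le_mul_right hmain (ENNReal.ofReal (1 / 2)))
  rw [← ENNReal.ofReal_mul (by norm_num), hGval]
  congr 1
  ring

lemma continuousOn_phiA {n : ℕ} (a : ℝ) (j : Fin n) :
    ContinuousOn (fun x => phiA a x j) (Xspace n) := by
  unfold phiA phi
  refine continuousOn_const.mul (continuousOn_finsetSum _ fun k hk => ?_)
  simp only [Real.cot_eq_cos_div_sin]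
  exact ContinuousOn.div (by fun_prop) (by fun_prop)
    fun x hx => Xspace.sin_ne_zero hx (Finset.ne_of_mem_erase hk)

lemma lintegral_ofReal_sq_lt_top {f g : ℝ → ℝ} {T C : ℝ}
    (hfg : ∀ s ∈ Ioc 0 T, |f s - g s| ≤ C)
    (hg : ∫⁻ s in Ioc 0 T, ENNReal.ofReal (g s ^ 2) < ⊤) :
    ∫⁻ s in Ioc 0 T, ENNReal.ofReal (f s ^ 2) < ⊤ := by
  calc ∫⁻ s in Ioc 0 T, ENNReal.ofReal (f s ^ 2)
      ≤ ∫⁻ s in Ioc 0 T, (2 * ENNReal.ofReal (g s ^ 2) + ENNReal.ofReal (2 * C ^ 2)) := by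
        refine setLIntegral_mono' measurableSet_Ioc fun s hs => ?_
        rw [show (2 : ℝ≥0∞) = ENNReal.ofReal 2 by simp, ← ENNReal.ofReal_mul (by norm_num),
          ← ENNReal.ofReal_add (by positivity) (by positivity)]
        refine ENNReal.ofReal_le_ofReal ?_
        nlinarith [sq_le_sq' (abs_le.1 (hfg s hs)).1 (abs_le.1 (hfg s hs)).2,
          sq_nonneg (f s - 2 * g s)]
    _ = 2 * (∫⁻ s in Ioc 0 T, ENNReal.ofReal (g s ^ 2)) +
          ENNReal.ofReal (2 * C ^ 2) * volume (Ioc 0 T) := by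
        rw [lintegral_add_right _ measurable_const, lintegral_const_mul' _ _ (by simp),
          setLIntegral_const]
    _ < ⊤ := by
        refine ENNReal.add_lt_top.2 ⟨ENNReal.mul_lt_top (by simp) hg, ?_⟩
        exact ENNReal.mul_lt_top ENNReal.ofReal_lt_top (by simp)

lemma iSup_mEnergyAX_eq_top_of_sinProd_eq_zero {n : ℕ} {a τ : ℝ} {θ : ℝ → Fin n → ℝ}
    (ha : 0 < a) (hτ : 0 < τ) (hcont : ContinuousOn θ (Icc 0 τ))
    (hX : ∀ s ∈ Ico (0 : ℝ) τ, θ s ∈ Xspace n) (hzero : sinProd (θ τ) = 0) :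
    (⨆ t ∈ Ico (0 : ℝ) τ, mEnergyAX n a t θ) = ⊤ := by
  by_contra hM
  set M := ⨆ t ∈ Ico (0 : ℝ) τ, mEnergyAX n a t θ
  have hbound : ∀ t ∈ Ico 0 τ,
      Real.log (sinProd (θ 0)) - M.toReal / a ≤ Real.log (sinProd (θ t)) := by
    intro t ht
    have h1 := (ofReal_log_sinProd_sub_le_mEnergyAX (a := a) ht.1
      fun s hs => hX s ⟨hs.1, hs.2.trans_lt ht.2⟩).trans
      (le_iSup₂ (f := fun t (_ : t ∈ Ico (0 : ℝ) τ) => mEnergyAX n a t θ) t ht)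
    have h2 := (ENNReal.ofReal_le_iff_le_toReal hM).1 h1
    have h3 := (le_div_iff₀' ha).2 h2
    linarith
  have hIco : ∀ᶠ t in 𝓝[<] τ, t ∈ Ico 0 τ := Ico_mem_nhdsLT hτ
  have hlim : Tendsto (fun t => sinProd (θ t)) (𝓝[<] τ) (𝓝[≠] 0) := by
    refine tendsto_nhdsWithin_iff.2 ⟨?_, hIco.mono fun t ht => Xspace.sinProd_ne_zero (hX t ht)⟩
    have h := (continuous_sinProd.comp_continuousOn hcont) τ (right_mem_Icc.2 hτ.le)
    simp only [ContinuousWithinAt, Function.comp_apply, hzero] at h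
    exact h.mono_left (nhdsWithin_le_of_mem (mem_of_superset hIco Ico_subset_Icc_self))
  obtain ⟨t, ht, htI⟩ := (((Real.tendsto_log_nhdsNE_zero.comp hlim).eventually_lt_atBot
    (Real.log (sinProd (θ 0)) - M.toReal / a)).and hIco).exists
  exact absurd (hbound t htI) (not_le.2 ht)

lemma mEnergyAX_lt_top_iff {n : ℕ} {a T : ℝ} {θ : ℝ → Fin n → ℝ}
    (hcont : ContinuousOn θ (Icc 0 T)) (hX : ∀ t ∈ Icc (0 : ℝ) T, θ t ∈ Xspace n) :
    mEnergyAX n a T θ < ⊤ ↔ ∀ j : Fin n, dEnergy1 T (fun t => θ t j) < ⊤ := by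
  have hhalf : ∀ I : ℝ≥0∞, ENNReal.ofReal (1 / 2) * I < ⊤ ↔ I < ⊤ := fun I =>
    ⟨fun h => ENNReal.lt_top_of_mul_ne_top_right h.ne (by simp),
      fun h => ENNReal.mul_lt_top ENNReal.ofReal_lt_top h⟩
  by_cases hAC : AbsCont T θ
  swap
  · have hnot : ¬ ∀ j, dEnergy1 T (fun t => θ t j) < ⊤ := by
      intro h
      refine hAC (absCont_iff_forall_absCont1.2 fun j => ?_)
      by_contra hj
      exact (h j).ne (if_neg hj)
    simp [mEnergyAX, hAC, hnot]
  have hmeas : ∀ j, Measurable (deriv fun t => θ t j) := fun j => measurable_deriv _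
  have hbd : ∀ j, ∃ C, ∀ s ∈ Icc (0 : ℝ) T, ‖2 * phiA a (θ s) j‖ ≤ C := fun j =>
    isCompact_Icc.exists_bound_of_continuousOn
      (continuousOn_const.mul ((continuousOn_phiA a j).comp hcont hX))
  have hsum : mEnergyAX n a T θ < ⊤ ↔ ∀ j, ∫⁻ s in Ioc 0 T,
      ENNReal.ofReal ((deriv (fun t => θ t j) s - 2 * phiA a (θ s) j) ^ 2) < ⊤ := by
    unfold mEnergyAX
    rw [if_pos ⟨hX, hAC⟩, hhalf]
    simp_rw [ENNReal.ofReal_sum_of_nonneg fun j _ => sq_nonneg _]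
    rw [lintegral_finsetSum', ENNReal.sum_lt_top]
    · simp
    · intro j _
      refine (AEMeasurable.pow_const ((hmeas j).aemeasurable.sub ?_) 2).ennreal_ofReal
      exact ((continuousOn_const.mul ((continuousOn_phiA a j).comp hcont hX)).mono
        Ioc_subset_Icc_self).aemeasurable measurableSet_Ioc
  rw [hsum]
  refine forall_congr' fun j => ?_
  obtain ⟨C, hC⟩ := hbd j
  unfold dEnergy1
  rw [if_pos (absCont_iff_forall_absCont1.1 hAC j), hhalf]
  constructor
  · refine lintegral_ofReal_sq_lt_top (C := C) fun s hs => ?_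
    rw [sub_sub_cancel]
    exact hC s (Ioc_subset_Icc_self hs)
  · refine lintegral_ofReal_sq_lt_top (C := C) fun s hs => ?_
    rw [sub_sub_cancel_left, abs_neg]
    exact hC s (Ioc_subset_Icc_self hs)

/-- For a continuous weakly ordered `θ` on `[0,T]` started in `𝒳ₙ`:
(i) if the collision time `τ_coll = inf{t ∈ [0,T] : min gap = 0}` is attained in `[0,T]`
(i.e. the set of collision times is nonempty), then `sup_{t < τ_coll} J^a_t(θ) = ∞`;
(ii) if there is no collision on `[0,T]`, then `J^a_T(θ) < ∞` iff every component has
finite Dirichlet energy. -/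
theorem finite_energy_iff_no_collision_and_finite_dirichlet
    (n : ℕ) (hn : 1 ≤ n) (T a : ℝ) (hT : 0 < T) (ha : 0 < a)
    (θ : ℝ → Fin n → ℝ)
    (hcont : ContinuousOn θ (Icc 0 T))
    (h0 : θ 0 ∈ Xspace n)
    (horder : ∀ t ∈ Icc (0 : ℝ) T,
      (∀ i j : Fin n, i ≤ j → θ t i ≤ θ t j) ∧ ∀ i j : Fin n, θ t i ≤ θ t j + 2 * π) :
    (∀ τ : ℝ,
      ({t ∈ Icc (0 : ℝ) T | minGap (θ t) = 0}).Nonempty →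
      τ = sInf {t ∈ Icc (0 : ℝ) T | minGap (θ t) = 0} →
      (⨆ t ∈ Ico (0 : ℝ) τ, mEnergyAX n a t θ) = ⊤) ∧
    ((∀ t ∈ Icc (0 : ℝ) T, minGap (θ t) ≠ 0) →
      (mEnergyAX n a T θ < ⊤ ↔ ∀ j : Fin n, dEnergy1 T (fun t => θ t j) < ⊤)) := by
  have hmem : ∀ t ∈ Icc (0 : ℝ) T, minGap (θ t) ≠ 0 → θ t ∈ Xspace n := fun t ht =>
    mem_Xspace_of_minGap_ne_zero (horder t ht).1 (horder t ht).2
  refine ⟨fun τ hne hτ => ?_, fun h => mEnergyAX_lt_top_iff hcont fun t ht => hmem t ht (h t ht)⟩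
  set S := {t ∈ Icc (0 : ℝ) T | minGap (θ t) = 0}
  have hSeq : S = Icc 0 T ∩ (fun t => sinProd (θ t)) ⁻¹' {0} := by
    ext t
    refine ⟨fun ht => ⟨ht.1, sinProd_eq_zero_of_minGap_eq_zero hn ht.2⟩, fun ht => ⟨ht.1, ?_⟩⟩
    by_contra hgap
    exact Xspace.sinProd_ne_zero (hmem t ht.1 hgap) ht.2
  have hclosed : IsClosed S := by
    rw [hSeq]
    exact (continuous_sinProd.comp_continuousOn hcont).preimage_isClosed_of_isClosed
      isClosed_Icc isClosed_singleton
  have hbdd : BddBelow S := ⟨0, fun t ht => ht.1.1⟩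
  have hτS : τ ∈ S := hτ ▸ hclosed.csInf_mem hne hbdd
  have hτ0 : 0 < τ := by
    refine hτS.1.1.lt_of_ne ?_
    rintro rfl
    exact Xspace.sinProd_ne_zero h0 (hSeq ▸ hτS).2
  refine iSup_mEnergyAX_eq_top_of_sinProd_eq_zero ha hτ0
    (hcont.mono (Icc_subset_Icc_right hτS.1.2)) (fun s hs => ?_) (hSeq ▸ hτS).2
  have hsT : s ∈ Icc 0 T := ⟨hs.1, hs.2.le.trans hτS.1.2⟩
  refine hmem s hsT fun hgap => ?_
  exact absurd (hτ ▸ csInf_le hbdd ⟨hsT, hgap⟩) (not_le.2 hs.2)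

end
end
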